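/- arXiv:2301.07353 — 2 statements merged into one kernel-verified Lean document; each statement's English description precedes it below -/
import Mathlib

section
/- Let p⁽¹⁾, p⁽²⁾ be probability vectors with coinciding supports and q⁽¹⁾, q⁽²⁾ be probability vectors with coinciding supports. If D_α(p⁽¹⁾‖p⁽²⁾) > D_α(q⁽¹⁾‖q⁽²⁾) and D_α(p⁽²⁾‖p⁽¹⁾) > D_α(q⁽²⁾‖q⁽¹⁾) for every α ∈ [1/2, ∞] (Rényi divergences, including the Kullback–Leibler divergence D₁ and the max-divergence D_∞), then for every sufficiently large n ∈ ℕ there exists a stochastic matrix T with T (p⁽¹⁾)^{⊗n} = (q⁽¹⁾)^{⊗n} and T (p⁽²⁾)^{⊗n} = (q⁽²⁾)^{⊗n}. -/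
open scoped BigOperators NNReal

noncomputable section

/-- A probability vector on a finite index type. -/
def IsProbVec {ι : Type*} [Fintype ι] (p : ι → ℝ) : Prop :=
  (∀ i, 0 ≤ p i) ∧ ∑ i, p i = 1

/-- A (column-)stochastic matrix: nonnegative entries, every column sums to `1`. -/
def IsStochastic {ι κ : Type*} [Fintype ι] [Fintype κ] (T : ι → κ → ℝ) : Prop :=
  (∀ i j, 0 ≤ T i j) ∧ ∀ j, ∑ i, T i j = 1

/-- Matrix–vector multiplication. -/
def matVec {ι κ : Type*} [Fintype κ] (T : ι → κ → ℝ) (v : κ → ℝ) : ι → ℝ :=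
  fun i => ∑ j, T i j * v j

/-- Kronecker product of two vectors. -/
def kron {ι κ : Type*} (p : ι → ℝ) (q : κ → ℝ) : ι × κ → ℝ :=
  fun x => p x.1 * q x.2

/-- `n`-fold Kronecker power of a vector. -/
def kpow {ι : Type*} (p : ι → ℝ) (n : ℕ) : (Fin n → ι) → ℝ :=
  fun f => ∏ j, p (f j)

/-- Kronecker product reindexed along `Fin (m * n)`. -/
def kronFin {m n : ℕ} (p : Fin m → ℝ) (q : Fin n → ℝ) : Fin (m * n) → ℝ :=
  fun i => kron p q (finProdFinEquiv.symm i)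

/-- The sum of the `k` largest entries of a nonnegative vector, expressed as the
largest sum over subsets of cardinality at most `k`. -/
def topSum {ι : Type*} [Fintype ι] (p : ι → ℝ) (k : ℕ) : ℝ :=
  ⨆ s ∈ {s : Finset ι | s.card ≤ k}, ∑ i ∈ s, p i

/-- Majorization for nonnegative vectors (possibly of different lengths):
equal total sums, and for each `k` the sum of the `k` largest entries of `p` is
at least that of `q`. -/
def Majorizes {ι κ : Type*} [Fintype ι] [Fintype κ] (p : ι → ℝ) (q : κ → ℝ) : Prop :=
  (∑ i, p i = ∑ j, q j) ∧ ∀ k : ℕ, topSum q k ≤ topSum p k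

/-- The size of the support, `‖p‖₀`. -/
def supp0 {ι : Type*} [Fintype ι] (p : ι → ℝ) : ℕ :=
  (Finset.univ.filter fun i => p i ≠ 0).card

/-- Entrywise nonnegativity. -/
def NonnegVec {n : ℕ} (p : Fin n → ℝ) : Prop := ∀ i, 0 ≤ p i

/-- The modified majorization preorder `≽₀,₁`: majorization plus equality of
support sizes. -/
def MajMod {ι κ : Type*} [Fintype ι] [Fintype κ] (p : ι → ℝ) (q : κ → ℝ) : Prop :=
  Majorizes p q ∧ supp0 p = supp0 q

/-- `f_α(p) = ∑_{i ∈ supp p} (p i)^α`. -/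
def fA {ι : Type*} [Fintype ι] (α : ℝ) (p : ι → ℝ) : ℝ :=
  ∑ i, if p i = 0 then 0 else p i ^ α

/-- Shannon entropy (the terms with `p i = 0` vanish). -/
def H1ent {ι : Type*} [Fintype ι] (p : ι → ℝ) : ℝ := -∑ i, p i * Real.log (p i)

/-- `H₀'(p) = ∑_{i ∈ supp p} log p_i`. -/
def H0' {ι : Type*} [Fintype ι] (p : ι → ℝ) : ℝ :=
  ∑ i, if p i = 0 then 0 else Real.log (p i)

/-- Rényi entropy of order `α` (with `α = 1` the Shannon entropy). -/
def Hent {ι : Type*} [Fintype ι] (α : ℝ) (p : ι → ℝ) : ℝ :=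
  if α = 1 then -∑ i, p i * Real.log (p i)
  else (1 / (1 - α)) * Real.log (∑ i, if p i = 0 then 0 else p i ^ α)

/-- Min-entropy `H_∞(p) = - log max_i p_i`. -/
def HentInf {ι : Type*} [Fintype ι] (p : ι → ℝ) : ℝ := -Real.log (⨆ i, p i)

/-- Kullback–Leibler divergence (the terms with `p i = 0` vanish). -/
def KL {n : ℕ} (p q : Fin n → ℝ) : ℝ :=
  ∑ i, p i * Real.log (p i / q i)

/-- Rényi divergence of order `α` for vectors with common support. -/
def Renyi {n : ℕ} (α : ℝ) (p q : Fin n → ℝ) : ℝ :=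
  if α = 1 then ∑ i, p i * Real.log (p i / q i)
  else (1 / (α - 1)) * Real.log (∑ i, if p i = 0 then 0 else p i ^ α * q i ^ (1 - α))

/-- Max-divergence `D_∞(p‖q) = max_{i ∈ supp q} log (p_i / q_i)`. -/
def RenyiInf {n : ℕ} (p q : Fin n → ℝ) : ℝ :=
  ⨆ i ∈ Finset.univ.filter (fun i => q i ≠ 0), Real.log (p i / q i)

/-- Rényi divergence with values in the extended reals `[0, ∞]`. -/
def RenyiE {n : ℕ} (α : ℝ) (p q : Fin n → ℝ) : EReal :=
  if α = 1 then
    (if ∀ i, p i ≠ 0 → q i ≠ 0 then ((∑ i, p i * Real.log (p i / q i) : ℝ) : EReal) else ⊤)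
  else if α < 1 then
    (if ∃ i, p i ≠ 0 ∧ q i ≠ 0 then
      (((1 / (α - 1)) *
        Real.log (∑ i, if p i = 0 ∨ q i = 0 then 0 else p i ^ α * q i ^ (1 - α)) : ℝ) : EReal)
    else (⊤ : EReal))
  else
    (if ∀ i, p i ≠ 0 → q i ≠ 0 then
      (((1 / (α - 1)) *
        Real.log (∑ i, if p i = 0 then 0 else p i ^ α * q i ^ (1 - α)) : ℝ) : EReal)
    else (⊤ : EReal))

/-- The common support of a tuple of vectors. -/
def suppIdx {d n : ℕ} (P : Fin d → Fin n → ℝ) : Finset (Fin n) :=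
  Finset.univ.filter fun i => ∃ k, P k i ≠ 0

/-- `f_α(P) = ∑_{i ∈ I} ∏_k (p_i^{(k)})^{α_k}` with `I` the common support. -/
def fMat {d n : ℕ} (α : Fin d → ℝ) (P : Fin d → Fin n → ℝ) : ℝ :=
  ∑ i ∈ suppIdx P, ∏ k, P k i ^ α k

/-- The matrix `α`-divergence `D_α`. -/
def Dmat {d n : ℕ} (α : Fin d → ℝ) (P : Fin d → Fin n → ℝ) : ℝ :=
  (1 / ((⨆ k, α k) - 1)) * Real.log (∑ i ∈ suppIdx P, ∏ k, P k i ^ α k)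

/-- The tropical matrix divergence `D^𝕋_β`. -/
def DmatT {d n : ℕ} (β : Fin d → ℝ) (P : Fin d → Fin n → ℝ) : ℝ :=
  (1 / (⨆ k, β k)) * Real.log (⨆ i ∈ suppIdx P, ∏ k, P k i ^ β k)

/-- Membership in `A₊`: entries summing to `1`, all nonnegative. -/
def memAplus {d : ℕ} (α : Fin d → ℝ) : Prop := (∑ k, α k = 1) ∧ ∀ k, 0 ≤ α k

/-- Membership in `A₋`: entries summing to `1`, one entry `≥ 1`, the others `≤ 0`. -/
def memAminus {d : ℕ} (α : Fin d → ℝ) : Prop :=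
  (∑ k, α k = 1) ∧ ∃ k, 1 ≤ α k ∧ ∀ l, l ≠ k → α l ≤ 0

/-- Membership in `B₋`: entries summing to `0`, one entry `≥ 0`, the others `≤ 0`. -/
def memBminus {d : ℕ} (β : Fin d → ℝ) : Prop :=
  (∑ k, β k = 0) ∧ ∃ k, 0 ≤ β k ∧ ∀ l, l ≠ k → β l ≤ 0

/-- `α` is none of the standard basis vectors `e₁, …, e_d`. -/
def notBasis {d : ℕ} (α : Fin d → ℝ) : Prop := ∀ k, α ≠ Pi.single k 1

/-- ℓ¹-distance of two vectors, padding with zeros to a common length. -/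
def l1PadDist {m n : ℕ} (p : Fin m → ℝ) (q : Fin n → ℝ) : ℝ :=
  ∑ i : Fin (max m n),
    |(if h : (i : ℕ) < m then p ⟨(i : ℕ), h⟩ else 0) -
      (if h : (i : ℕ) < n then q ⟨(i : ℕ), h⟩ else 0)|

/-- Index type of the direct sum `⨁_{s=0}^{n-1} p^{⊗(n-1-s)} ⊗ q^{⊗s}`. -/
abbrev TrickIdx (m m' n : ℕ) : Type :=
  Σ s : Fin n, (Fin (n - 1 - (s : ℕ)) → Fin m) × (Fin (s : ℕ) → Fin m')

/-- The standard catalyst `(1/n) ⨁_{s=0}^{n-1} p^{⊗(n-1-s)} ⊗ q^{⊗s}`. -/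
def trick {m m' : ℕ} (p : Fin m → ℝ) (q : Fin m' → ℝ) (n : ℕ) : TrickIdx m m' n → ℝ :=
  fun x => (1 / (n : ℝ)) * (kpow p (n - 1 - (x.1 : ℕ)) x.2.1 * kpow q (x.1 : ℕ) x.2.2)

/-- A valid tuple: nonnegative entries and common support across the tuple. -/
def TupOK {d n : ℕ} (P : Fin d → Fin n → ℝ) : Prop :=
  (∀ k i, 0 ≤ P k i) ∧ ∀ k l i, P k i ≠ 0 ↔ P l i ≠ 0

/-- Matrix majorization of tuples: a single stochastic matrix carrying each column
of `P` to the corresponding column of `Q`. -/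
def TupMaj {d m n : ℕ} (P : Fin d → Fin m → ℝ) (Q : Fin d → Fin n → ℝ) : Prop :=
  ∃ T : Fin n → Fin m → ℝ, IsStochastic T ∧ ∀ k, matVec T (P k) = Q k

/-- The value of a linear functional (encoded by a pair) at a point. -/
def rmLin (l : ℝ × ℝ) (x y : ℝ) : ℝ := l.1 * x + l.2 * y

lemma rm_sup_sum_le {ι κ : Type*} [Fintype ι] [Fintype κ]
    (P1 P2 : ι → ℝ) (Q1 Q2 : κ → ℝ)
    (hP2 : ∀ i, 0 ≤ P2 i) (hQ2 : ∀ j, 0 ≤ Q2 j)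
    (h1 : ∑ i, P1 i = ∑ j, Q1 j) (h2 : ∑ i, P2 i = ∑ j, Q2 j)
    (H : ∀ t : ℝ, ∑ j, max 0 (Q1 j - t * Q2 j) ≤ ∑ i, max 0 (P1 i - t * P2 i)) :
    ∀ (N : ℕ) (s : Finset (ℝ × ℝ)) (hs : s.Nonempty), s.card ≤ N →
      ∑ j, s.sup' hs (fun l => rmLin l (Q1 j) (Q2 j)) ≤
        ∑ i, s.sup' hs (fun l => rmLin l (P1 i) (P2 i)) := by
  intro N
  induction N with
  | zero =>
    intro s hs hc
    have := hs.card_pos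
    omega
  | succ N ih =>
    intro s hs hc
    obtain ⟨l0, hl0, hl0max⟩ := s.exists_max_image (fun l => l.1) hs
    have hne : (s.filter (fun l => l.1 = l0.1)).Nonempty := ⟨l0, by simp [hl0]⟩
    obtain ⟨l, hl, hlmax⟩ := (s.filter (fun l => l.1 = l0.1)).exists_max_image (fun l => l.2) hne
    obtain ⟨hls, hl1⟩ := Finset.mem_filter.1 hl
    have hslope : ∀ j ∈ s, j.1 ≤ l.1 := fun j hj => by rw [hl1]; exact hl0max j hj
    have hint : ∀ j ∈ s, j.1 = l.1 → j.2 ≤ l.2 := fun j hj hjl =>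
      hlmax j (Finset.mem_filter.2 ⟨hj, by rw [hjl, hl1]⟩)
    by_cases hs' : (s.filter (fun j => j.1 < l.1)).Nonempty
    · obtain ⟨k, hk, hkmax⟩ := (s.filter (fun j => j.1 < l.1)).exists_max_image
        (fun j => (j.2 - l.2) / (l.1 - j.1)) hs'
      obtain ⟨hks, hkl⟩ := Finset.mem_filter.1 hk
      set t := (k.2 - l.2) / (l.1 - k.1) with ht
      have hkt : k.1 * t + k.2 = l.1 * t + l.2 := by
        have : l.1 - k.1 ≠ 0 := by linarith
        have : t * (l.1 - k.1) = k.2 - l.2 := by rw [ht]; field_simp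
        linarith
      have hjt : ∀ j ∈ s, j.1 * t + j.2 ≤ l.1 * t + l.2 := by
        intro j hj
        rcases lt_or_eq_of_le (hslope j hj) with hlt | heq
        · have h3 := hkmax j (Finset.mem_filter.2 ⟨hj, hlt⟩)
          have h4 : (j.2 - l.2) ≤ t * (l.1 - j.1) := by
            rwa [div_le_iff₀ (by linarith)] at h3
          linarith
        · have := hint j hj heq
          rw [heq]; linarith
      have hs2 : (s.filter (fun j => j.1 ≤ k.1)).Nonempty := ⟨k, by simp [hks]⟩
      have hk2 : k ∈ s.filter (fun j => j.1 ≤ k.1) := Finset.mem_filter.2 ⟨hks, le_rfl⟩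
      have hcard : (s.filter (fun j => j.1 ≤ k.1)).card < s.card := by
        apply Finset.card_lt_card
        refine ⟨Finset.filter_subset _ _, fun hsub => ?_⟩
        have := (Finset.mem_filter.1 (hsub hls)).2
        linarith
      have key : ∀ x y : ℝ, 0 ≤ y → s.sup' hs (fun l => rmLin l x y) =
          (s.filter (fun j => j.1 ≤ k.1)).sup' hs2 (fun l => rmLin l x y)
            + (l.1 - k.1) * max 0 (x - t * y) := by
        intro x y hy
        have hlin : ∀ j : ℝ × ℝ, rmLin j x y = (j.1 * t + j.2) * y + j.1 * (x - t * y) := by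
          intro j; unfold rmLin; ring
        have hmono : ∀ j ∈ s, (j.1 * t + j.2) * y ≤ (l.1 * t + l.2) * y := fun j hj =>
          mul_le_mul_of_nonneg_right (hjt j hj) hy
        rcases le_total (x - t * y) 0 with hx | hx
        · rw [max_eq_left hx, mul_zero, add_zero]
          apply le_antisymm
          · apply Finset.sup'_le
            intro j hj
            by_cases hjk : j.1 ≤ k.1
            · exact Finset.le_sup' (fun l => rmLin l x y) (Finset.mem_filter.2 ⟨hj, hjk⟩)
            · refine le_trans ?_ (Finset.le_sup' (fun l => rmLin l x y) hk2)
              show rmLin j x y ≤ rmLin k x y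
              rw [hlin j, hlin k, hkt]
              have := hmono j hj
              push Not at hjk
              nlinarith [mul_nonneg_of_nonpos_of_nonpos hx (by linarith : k.1 - j.1 ≤ 0)]
          · apply Finset.sup'_le
            intro j hj
            exact Finset.le_sup' (fun l => rmLin l x y) (Finset.mem_filter.1 hj).1
        · rw [max_eq_right hx]
          have e1 : s.sup' hs (fun l => rmLin l x y) = rmLin l x y := by
            apply le_antisymm
            · apply Finset.sup'_le
              intro j hj
              rw [hlin j, hlin l]
              have := hmono j hj
              nlinarith [mul_nonneg hx (by linarith [hslope j hj] : 0 ≤ l.1 - j.1)]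
            · exact Finset.le_sup' (fun l => rmLin l x y) hls
          have e2 : (s.filter (fun j => j.1 ≤ k.1)).sup' hs2 (fun l => rmLin l x y)
              = rmLin k x y := by
            apply le_antisymm
            · apply Finset.sup'_le
              intro j hj
              obtain ⟨hj, hjk⟩ := Finset.mem_filter.1 hj
              rw [hlin j, hlin k, hkt]
              have := hmono j hj
              nlinarith [mul_nonneg hx (by linarith : 0 ≤ k.1 - j.1)]
            · exact Finset.le_sup' (fun l => rmLin l x y) hk2
          rw [e1, e2, hlin k, hlin l, hkt]
          ring
      have ih' := ih _ hs2 (by omega)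
      rw [Finset.sum_congr rfl (fun j _ => key (Q1 j) (Q2 j) (hQ2 j)),
        Finset.sum_congr rfl (fun j _ => key (P1 j) (P2 j) (hP2 j)),
        Finset.sum_add_distrib, Finset.sum_add_distrib, ← Finset.mul_sum, ← Finset.mul_sum]
      have := mul_le_mul_of_nonneg_left (H t) (by linarith : 0 ≤ l.1 - k.1)
      linarith
    · have key : ∀ x y : ℝ, 0 ≤ y → s.sup' hs (fun l => rmLin l x y) = rmLin l x y := by
        intro x y hy
        apply le_antisymm
        · apply Finset.sup'_le
          intro j hj
          have hjl : j.1 = l.1 := by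
            by_contra hne
            exact hs' ⟨j, Finset.mem_filter.2 ⟨hj, lt_of_le_of_ne (hslope j hj) hne⟩⟩
          have := mul_le_mul_of_nonneg_right (hint j hj hjl) hy
          unfold rmLin
          rw [hjl]; linarith
        · exact Finset.le_sup' (fun l => rmLin l x y) hls
      rw [Finset.sum_congr rfl (fun j _ => key (Q1 j) (Q2 j) (hQ2 j)),
        Finset.sum_congr rfl (fun j _ => key (P1 j) (P2 j) (hP2 j))]
      unfold rmLin
      rw [Finset.sum_add_distrib, Finset.sum_add_distrib, ← Finset.mul_sum, ← Finset.mul_sum,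
        ← Finset.mul_sum, ← Finset.mul_sum, h1, h2]

lemma rm_blackwell {ι κ : Type*} [Fintype ι] [Fintype κ] [DecidableEq κ] [Nonempty κ]
    (P1 P2 : ι → ℝ) (Q1 Q2 : κ → ℝ)
    (hP2 : ∀ i, 0 ≤ P2 i) (hQ2 : ∀ j, 0 ≤ Q2 j)
    (h1 : ∑ i, P1 i = ∑ j, Q1 j) (h2 : ∑ i, P2 i = ∑ j, Q2 j)
    (H : ∀ t : ℝ, ∑ j, max 0 (Q1 j - t * Q2 j) ≤ ∑ i, max 0 (P1 i - t * P2 i)) :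
    ∃ T : κ → ι → ℝ, IsStochastic T ∧ matVec T P1 = Q1 ∧ matVec T P2 = Q2 := by
  classical
  let S : Set (ι → κ → ℝ) := Set.pi Set.univ (fun _ => stdSimplex ℝ κ)
  have hSc : IsCompact S := isCompact_univ_pi (fun _ => isCompact_stdSimplex ℝ κ)
  have hSv : Convex ℝ S := convex_pi (fun _ _ => convex_stdSimplex ℝ κ)
  let Φ : (ι → κ → ℝ) →ₗ[ℝ] (κ → ℝ) × (κ → ℝ) :=
    { toFun := fun T => (fun j => ∑ i, T i j * P1 i, fun j => ∑ i, T i j * P2 i)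
      map_add' := by
        intro A B
        ext j <;> simp [add_mul, Finset.sum_add_distrib]
      map_smul' := by
        intro r A
        ext j <;> simp [Finset.mul_sum, mul_assoc] }
  have hΦ : Continuous Φ := by
    show Continuous (fun T : ι → κ → ℝ =>
      ((fun j => ∑ i, T i j * P1 i, fun j => ∑ i, T i j * P2 i) : (κ → ℝ) × (κ → ℝ)))
    fun_prop
  by_cases hmem : (Q1, Q2) ∈ Φ '' S
  · obtain ⟨T, hT, hTQ⟩ := hmem
    refine ⟨fun j i => T i j, ⟨fun j i => (hT i trivial).1 j, fun i => (hT i trivial).2⟩, ?_, ?_⟩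
    · exact congrArg Prod.fst hTQ
    · exact congrArg Prod.snd hTQ
  · exfalso
    obtain ⟨f, u, hfu, huf⟩ := geometric_hahn_banach_closed_point (hSv.linear_image Φ)
      (hSc.image hΦ).isClosed hmem
    let a : κ → ℝ := fun j => f (Pi.single j 1, 0)
    let b : κ → ℝ := fun j => f (0, Pi.single j 1)
    have hf : ∀ x y : κ → ℝ, f (x, y) = ∑ j, (a j * x j + b j * y j) := by
      intro x y
      have e : ((x, y) : (κ → ℝ) × (κ → ℝ)) = ∑ j, (x j • ((Pi.single j 1, 0) : (κ → ℝ) × (κ → ℝ))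
          + y j • ((0, Pi.single j 1) : (κ → ℝ) × (κ → ℝ))) := by
        ext k
        · simp [Prod.fst_sum, Finset.sum_apply, Pi.single_apply]
        · simp [Prod.snd_sum, Finset.sum_apply, Pi.single_apply]
      rw [e, map_sum]
      refine Finset.sum_congr rfl fun j _ => ?_
      rw [map_add, map_smul, map_smul]
      simp only [smul_eq_mul, a, b]; ring
    let s : Finset (ℝ × ℝ) := Finset.univ.image (fun j => (a j, b j))
    have hs : s.Nonempty := Finset.univ_nonempty.image _
    have hle := rm_sup_sum_le P1 P2 Q1 Q2 hP2 hQ2 h1 h2 H s.card s hs le_rfl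
    have hex : ∀ i, ∃ j, s.sup' hs (fun l => rmLin l (P1 i) (P2 i)) = a j * P1 i + b j * P2 i := by
      intro i
      obtain ⟨l, hl, he⟩ := Finset.exists_mem_eq_sup' hs (fun l => rmLin l (P1 i) (P2 i))
      obtain ⟨j, -, rfl⟩ := Finset.mem_image.1 hl
      exact ⟨j, he⟩
    choose g hg using hex
    have hTS : (fun i => Pi.single (g i) (1 : ℝ)) ∈ S := by
      intro i _
      exact single_mem_stdSimplex ℝ (g i)
    have hlt := hfu _ (Set.mem_image_of_mem Φ hTS)
    have e1 : f (Φ (fun i => Pi.single (g i) (1 : ℝ))) = ∑ i, (a (g i) * P1 i + b (g i) * P2 i) := by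
      show f (_, _) = _
      rw [hf]
      simp only [Finset.mul_sum]
      simp only [← Finset.sum_add_distrib]
      rw [Finset.sum_comm]
      refine Finset.sum_congr rfl fun i _ => ?_
      rw [Finset.sum_eq_single (g i)]
      · simp
      · intro j _ hj
        simp [hj]
      · simp
    have e2 : f (Q1, Q2) ≤ ∑ j, s.sup' hs (fun l => rmLin l (Q1 j) (Q2 j)) := by
      rw [hf]
      refine Finset.sum_le_sum fun j _ => ?_
      exact Finset.le_sup' (fun l => rmLin l (Q1 j) (Q2 j))
        (Finset.mem_image_of_mem (fun j => (a j, b j)) (Finset.mem_univ j))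
    rw [e1, ← Finset.sum_congr rfl (fun i _ => hg i)] at hlt
    linarith

/-- Moment generating function of `L` with weights `w`. -/
def rmM {ι : Type*} [Fintype ι] (w L : ι → ℝ) (θ : ℝ) : ℝ := ∑ i, w i * Real.exp (θ * L i)

/-- Mean of `L` under the tilted weights. -/
def rmMu {ι : Type*} [Fintype ι] (w L : ι → ℝ) (θ : ℝ) : ℝ :=
  (∑ i, w i * L i * Real.exp (θ * L i)) / rmM w L θ

/-- Cumulant generating function. -/
def rmK {ι : Type*} [Fintype ι] (w L : ι → ℝ) (θ : ℝ) : ℝ := Real.log (rmM w L θ)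

/-- Sum of the log-ratios along a sequence. -/
def rmS {ι : Type*} (L : ι → ℝ) (n : ℕ) (f : Fin n → ι) : ℝ := ∑ j, L (f j)

/-- The hockey-stick quantity. -/
def rmP {ι : Type*} [Fintype ι] (w L : ι → ℝ) (n : ℕ) (c : ℝ) : ℝ :=
  ∑ f, kpow w n f * max 0 (Real.exp (rmS L n f) - Real.exp (n * c))

/-- The overlap quantity. -/
def rmZ {ι : Type*} [Fintype ι] (w L : ι → ℝ) (n : ℕ) (c : ℝ) : ℝ :=
  ∑ f, kpow w n f * min (Real.exp (rmS L n f)) (Real.exp (n * c))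

lemma kpow_nonneg {ι : Type*} {w : ι → ℝ} (hw : ∀ i, 0 ≤ w i) (n : ℕ) (f : Fin n → ι) :
    0 ≤ kpow w n f := Finset.prod_nonneg fun _ _ => hw _

lemma rm_exists_pos {ι : Type*} [Fintype ι] {w : ι → ℝ} (hw : IsProbVec w) : ∃ i, 0 < w i := by
  by_contra h
  push Not at h
  have : ∑ i, w i ≤ 0 := Finset.sum_nonpos fun i _ => h i
  rw [hw.2] at this
  linarith

lemma rmM_pos {ι : Type*} [Fintype ι] {w : ι → ℝ} (hw : IsProbVec w) (L : ι → ℝ) (θ : ℝ) :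
    0 < rmM w L θ := by
  obtain ⟨i, hi⟩ := rm_exists_pos hw
  exact Finset.sum_pos' (fun i _ => mul_nonneg (hw.1 i) (Real.exp_pos _).le)
    ⟨i, Finset.mem_univ _, mul_pos hi (Real.exp_pos _)⟩

lemma rmM_cont {ι : Type*} [Fintype ι] (w L : ι → ℝ) : Continuous (rmM w L) := by
  unfold rmM; fun_prop

lemma rmMu_cont {ι : Type*} [Fintype ι] {w : ι → ℝ} (hw : IsProbVec w) (L : ι → ℝ) :
    Continuous (rmMu w L) := by
  unfold rmMu
  exact Continuous.div (by fun_prop) (rmM_cont w L) (fun θ => (rmM_pos hw L θ).ne')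

lemma rmK_cont {ι : Type*} [Fintype ι] {w : ι → ℝ} (hw : IsProbVec w) (L : ι → ℝ) :
    Continuous (rmK w L) :=
  (rmM_cont w L).log (fun θ => (rmM_pos hw L θ).ne')

lemma rmM_eq_exp {ι : Type*} [Fintype ι] {w : ι → ℝ} (hw : IsProbVec w) (L : ι → ℝ) (θ : ℝ) :
    rmM w L θ = Real.exp (rmK w L θ) := (Real.exp_log (rmM_pos hw L θ)).symm

lemma rmM_pow_eq {ι : Type*} [Fintype ι] {w : ι → ℝ} (hw : IsProbVec w) (L : ι → ℝ) (θ : ℝ)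
    (n : ℕ) : rmM w L θ ^ n = Real.exp (n * rmK w L θ) := by
  rw [rmM_eq_exp hw, ← Real.exp_nat_mul]

lemma rmK_zero {ι : Type*} [Fintype ι] {w : ι → ℝ} (hw : IsProbVec w) (L : ι → ℝ) :
    rmK w L 0 = 0 := by
  simp [rmK, rmM, hw.2]

lemma rmK_one {ι : Type*} [Fintype ι] {w L : ι → ℝ} (h : ∑ i, w i * Real.exp (L i) = 1) :
    rmK w L 1 = 0 := by
  simp [rmK, rmM, h]

/-- Tangent line inequality for the cumulant generating function. -/
lemma rmK_tangent {ι : Type*} [Fintype ι] {w : ι → ℝ} (hw : IsProbVec w) (L : ι → ℝ) (θ θ' : ℝ) :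
    rmK w L θ + rmMu w L θ * (θ' - θ) ≤ rmK w L θ' := by
  have hM := rmM_pos hw L θ
  have hmu : ∑ i, w i * L i * Real.exp (θ * L i) = rmMu w L θ * rmM w L θ := by
    exact (div_mul_cancel₀ _ hM.ne').symm
  have h : rmM w L θ * Real.exp (rmMu w L θ * (θ' - θ)) ≤ rmM w L θ' := by
    have h1 : rmM w L θ ≤ rmM w L θ' * Real.exp (-(rmMu w L θ * (θ' - θ))) := by
      have h2 : ∑ i, w i * Real.exp (θ * L i) * (1 + (θ' - θ) * (L i - rmMu w L θ)) ≤
          rmM w L θ' * Real.exp (-(rmMu w L θ * (θ' - θ))) := by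
        unfold rmM
        rw [Finset.sum_mul]
        refine Finset.sum_le_sum fun i _ => ?_
        have e : w i * Real.exp (θ' * L i) * Real.exp (-(rmMu w L θ * (θ' - θ))) =
            w i * Real.exp (θ * L i) * Real.exp ((θ' - θ) * (L i - rmMu w L θ)) := by
          rw [mul_assoc, mul_assoc, ← Real.exp_add, ← Real.exp_add]; ring_nf
        rw [e]
        refine mul_le_mul_of_nonneg_left ?_ (mul_nonneg (hw.1 i) (Real.exp_pos _).le)
        linarith [Real.add_one_le_exp ((θ' - θ) * (L i - rmMu w L θ))]
      refine le_trans (le_of_eq ?_) h2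
      have e : ∀ i, w i * Real.exp (θ * L i) * (1 + (θ' - θ) * (L i - rmMu w L θ)) =
          (1 - (θ' - θ) * rmMu w L θ) * (w i * Real.exp (θ * L i)) +
            (θ' - θ) * (w i * L i * Real.exp (θ * L i)) := fun i => by ring
      rw [Finset.sum_congr rfl fun i _ => e i, Finset.sum_add_distrib, ← Finset.mul_sum,
        ← Finset.mul_sum, hmu]
      show _ = (1 - (θ' - θ) * rmMu w L θ) * rmM w L θ + _
      ring
    calc _ ≤ rmM w L θ' * Real.exp (-(rmMu w L θ * (θ' - θ))) * Real.exp (rmMu w L θ * (θ' - θ)) :=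
          mul_le_mul_of_nonneg_right h1 (Real.exp_pos _).le
      _ = _ := by rw [mul_assoc, ← Real.exp_add]; simp
  unfold rmK
  rw [← Real.log_exp (rmMu w L θ * (θ' - θ)), ← Real.log_mul hM.ne' (Real.exp_pos _).ne']
  exact Real.log_le_log (mul_pos hM (Real.exp_pos _)) h

lemma rmMu_mono {ι : Type*} [Fintype ι] {w : ι → ℝ} (hw : IsProbVec w) (L : ι → ℝ) :
    Monotone (rmMu w L) := by
  intro θ θ' h
  rcases eq_or_lt_of_le h with rfl | h
  · exact le_rfl
  have h1 := rmK_tangent hw L θ θ'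
  have h2 := rmK_tangent hw L θ' θ
  by_contra hc
  push Not at hc
  nlinarith

/-- Limits of the tilted mean. -/
lemma rmMu_large {ι : Type*} [Fintype ι] {w : ι → ℝ} (hw : IsProbVec w) (L : ι → ℝ) (i : ι)
    (hi : 0 < w i) (c : ℝ) (hc : c < L i) : ∃ θ, 0 < θ ∧ c < rmMu w L θ := by
  have hK : ∀ θ, Real.log (w i) + θ * L i ≤ rmK w L θ := by
    intro θ
    rw [← Real.log_exp (θ * L i), ← Real.log_mul hi.ne' (Real.exp_pos _).ne']
    refine Real.log_le_log (mul_pos hi (Real.exp_pos _)) ?_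
    exact Finset.single_le_sum (f := fun i => w i * Real.exp (θ * L i))
      (fun i _ => mul_nonneg (hw.1 i) (Real.exp_pos _).le) (Finset.mem_univ i)
  refine ⟨(|Real.log (w i)| + 1) / (L i - c), div_pos (by positivity) (by linarith), ?_⟩
  set θ := (|Real.log (w i)| + 1) / (L i - c) with hθ
  have hθpos : 0 < θ := div_pos (by positivity) (by linarith)
  have h1 := rmK_tangent hw L θ 0
  rw [rmK_zero hw] at h1
  have h2 := hK θ
  have h3 : θ * (L i - c) = |Real.log (w i)| + 1 := by
    rw [hθ]; exact div_mul_cancel₀ _ (by linarith)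
  have h4 := neg_abs_le (Real.log (w i))
  by_contra hcon
  push Not at hcon
  nlinarith

lemma rmM_neg {ι : Type*} [Fintype ι] (w L : ι → ℝ) (θ : ℝ) :
    rmM w (fun i => -L i) θ = rmM w L (-θ) := by
  unfold rmM; simp

lemma rmMu_neg {ι : Type*} [Fintype ι] (w L : ι → ℝ) (θ : ℝ) :
    rmMu w (fun i => -L i) θ = -rmMu w L (-θ) := by
  unfold rmMu; rw [rmM_neg]; simp [neg_div]

lemma rmMu_small {ι : Type*} [Fintype ι] {w : ι → ℝ} (hw : IsProbVec w) (L : ι → ℝ) (i : ι)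
    (hi : 0 < w i) (c : ℝ) (hc : L i < c) : ∃ θ, rmMu w L θ < c := by
  obtain ⟨θ, -, h⟩ := rmMu_large hw (fun i => -L i) i hi (-c) (by linarith)
  rw [rmMu_neg] at h
  exact ⟨-θ, by linarith⟩

lemma rmMu_surj {ι : Type*} [Fintype ι] {w : ι → ℝ} (hw : IsProbVec w) (L : ι → ℝ) (i j : ι)
    (hi : 0 < w i) (hj : 0 < w j) (c : ℝ) (hc : L i < c) (hc' : c < L j) :
    ∃ θ, rmMu w L θ = c := by
  obtain ⟨a, ha⟩ := rmMu_small hw L i hi c hc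
  obtain ⟨b, -, hb⟩ := rmMu_large hw L j hj c hc'
  exact mem_range_of_exists_le_of_exists_ge (rmMu_cont hw L) ⟨a, ha.le⟩ ⟨b, hb.le⟩

lemma rm_kpow_exp {ι : Type*} (w L : ι → ℝ) (θ : ℝ) (n : ℕ) (f : Fin n → ι) :
    kpow (fun i => w i * Real.exp (θ * L i)) n f = kpow w n f * Real.exp (θ * rmS L n f) := by
  unfold kpow rmS
  rw [Finset.prod_mul_distrib, Finset.mul_sum, Real.exp_sum]

lemma rm_sum_exp {ι : Type*} [Fintype ι] (w L : ι → ℝ) (θ : ℝ) (n : ℕ) :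
    ∑ f, kpow w n f * Real.exp (θ * rmS L n f) = rmM w L θ ^ n := by
  classical
  rw [← Finset.sum_congr rfl fun f _ => rm_kpow_exp w L θ n f]
  unfold rmM kpow
  rw [Fintype.sum_pow]

/-- The largest tilt parameter with prescribed mean. -/
lemma rmMu_sup {ι : Type*} [Fintype ι] {w : ι → ℝ} (hw : IsProbVec w) (L : ι → ℝ) (i j : ι)
    (hi : 0 < w i) (hj : 0 < w j) (c : ℝ) (hc : L i < c) (hc' : c < L j) :
    ∃ θ, rmMu w L θ = c ∧ ∀ θ', θ < θ' → c < rmMu w L θ' := by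
  obtain ⟨t, ht⟩ := rmMu_surj hw L i j hi hj c hc hc'
  obtain ⟨b, -, hb⟩ := rmMu_large hw L j hj c hc'
  have hcl : IsClosed {θ | rmMu w L θ ≤ c} := isClosed_le (rmMu_cont hw L) continuous_const
  have hne : {θ | rmMu w L θ ≤ c}.Nonempty := ⟨t, ht.le⟩
  have hbdd : BddAbove {θ | rmMu w L θ ≤ c} := by
    refine ⟨b, fun θ hθ => ?_⟩
    by_contra hcon
    push Not at hcon
    have := rmMu_mono hw L hcon.le
    have hθ' : rmMu w L θ ≤ c := hθ
    linarith
  have hmem := hcl.csSup_mem hne hbdd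
  refine ⟨sSup {θ | rmMu w L θ ≤ c}, le_antisymm hmem ?_, fun θ' hθ' => ?_⟩
  · have := rmMu_mono hw L (le_csSup hbdd (show t ∈ {θ | rmMu w L θ ≤ c} from ht.le))
    linarith
  · by_contra hcon
    push Not at hcon
    exact absurd (le_csSup hbdd (show θ' ∈ {θ | rmMu w L θ ≤ c} from hcon)) (not_le.2 hθ')

lemma rm_sum_exp' {ι : Type*} [Fintype ι] {w : ι → ℝ} (hw : IsProbVec w) (L : ι → ℝ) (θ : ℝ)
    (n : ℕ) (d : ℝ) :
    ∑ f, kpow w n f * Real.exp (θ * rmS L n f + n * d) = Real.exp (n * (rmK w L θ + d)) := by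
  rw [mul_add, Real.exp_add, ← rmM_pow_eq hw, ← rm_sum_exp, Finset.sum_mul]
  refine Finset.sum_congr rfl fun f _ => ?_
  rw [Real.exp_add, mul_assoc]

lemma rmP_upper {ι : Type*} [Fintype ι] {w : ι → ℝ} (hw : IsProbVec w) (L : ι → ℝ) (θ : ℝ)
    (hθ : 1 ≤ θ) (n : ℕ) (c : ℝ) :
    rmP w L n c ≤ Real.exp (n * (rmK w L θ + (1 - θ) * c)) := by
  rw [← rm_sum_exp' hw]
  refine Finset.sum_le_sum fun f _ => mul_le_mul_of_nonneg_left ?_ (kpow_nonneg hw.1 n f)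
  refine max_le (Real.exp_pos _).le ?_
  rcases le_total (rmS L n f) (n * c) with h | h
  · have := Real.exp_le_exp.2 h
    have := Real.exp_pos (θ * rmS L n f + n * ((1 - θ) * c))
    linarith
  · have h1 : Real.exp (rmS L n f) ≤ Real.exp (θ * rmS L n f + n * ((1 - θ) * c)) := by
      apply Real.exp_le_exp.2
      nlinarith
    have := Real.exp_pos (n * c)
    linarith

lemma rmZ_upper {ι : Type*} [Fintype ι] {w : ι → ℝ} (hw : IsProbVec w) (L : ι → ℝ) (θ : ℝ)
    (hθ : 0 ≤ θ) (hθ' : θ ≤ 1) (n : ℕ) (c : ℝ) :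
    rmZ w L n c ≤ Real.exp (n * (rmK w L θ + (1 - θ) * c)) := by
  rw [← rm_sum_exp' hw]
  refine Finset.sum_le_sum fun f _ => mul_le_mul_of_nonneg_left ?_ (kpow_nonneg hw.1 n f)
  rcases le_total (rmS L n f) (n * c) with h | h
  · refine (min_le_left _ _).trans (Real.exp_le_exp.2 ?_)
    nlinarith
  · refine (min_le_right _ _).trans (Real.exp_le_exp.2 ?_)
    nlinarith

lemma rm_exp_ev (x y C : ℝ) (hxy : x < y) (hC : 0 < C) :
    ∀ᶠ n : ℕ in Filter.atTop, Real.exp (n * x) ≤ C * Real.exp (n * y) := by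
  have h : Filter.Tendsto (fun n : ℕ => Real.exp (x - y) ^ n) Filter.atTop (nhds 0) :=
    tendsto_pow_atTop_nhds_zero_of_lt_one (Real.exp_pos _).le (by
      rw [Real.exp_lt_one_iff]; linarith)
  filter_upwards [h.eventually (gt_mem_nhds hC)] with n hn
  have e : Real.exp (n * x) = Real.exp (x - y) ^ n * Real.exp (n * y) := by
    rw [← Real.exp_nat_mul, ← Real.exp_add]; ring_nf
  rw [e]
  exact mul_le_mul_of_nonneg_right hn.le (Real.exp_pos _).le

lemma rm_tail_up {ι : Type*} [Fintype ι] {w : ι → ℝ} (hw : IsProbVec w) (L : ι → ℝ) (θ b : ℝ)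
    (hb : rmMu w L θ < b) : ∃ h, 0 < h ∧ rmK w L (θ + h) - h * b < rmK w L θ := by
  have hc : Filter.Tendsto (fun h => rmMu w L (θ + h)) (nhdsWithin 0 (Set.Ioi 0))
      (nhds (rmMu w L θ)) := by
    have : Continuous (fun h => rmMu w L (θ + h)) := (rmMu_cont hw L).comp (by fun_prop)
    have h := this.tendsto 0
    simp only [add_zero] at h
    exact h.mono_left nhdsWithin_le_nhds
  obtain ⟨h, h1, h2⟩ := ((hc.eventually (gt_mem_nhds hb)).and self_mem_nhdsWithin).exists
  have h2' : 0 < h := h2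
  refine ⟨h, h2', ?_⟩
  have := rmK_tangent hw L (θ + h) θ
  nlinarith

lemma rm_tail_down {ι : Type*} [Fintype ι] {w : ι → ℝ} (hw : IsProbVec w) (L : ι → ℝ) (θ a : ℝ)
    (ha : a < rmMu w L θ) : ∃ h, 0 < h ∧ rmK w L (θ - h) + h * a < rmK w L θ := by
  have hc : Filter.Tendsto (fun h => rmMu w L (θ - h)) (nhdsWithin 0 (Set.Ioi 0))
      (nhds (rmMu w L θ)) := by
    have : Continuous (fun h => rmMu w L (θ - h)) := (rmMu_cont hw L).comp (by fun_prop)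
    have h := this.tendsto 0
    simp only [sub_zero] at h
    exact h.mono_left nhdsWithin_le_nhds
  obtain ⟨h, h1, h2⟩ := ((hc.eventually (lt_mem_nhds ha)).and self_mem_nhdsWithin).exists
  have h2' : 0 < h := h2
  refine ⟨h, h2', ?_⟩
  have := rmK_tangent hw L (θ - h) θ
  nlinarith

/-- Concentration under the tilted measure. -/
lemma rm_conc {ι : Type*} [Fintype ι] {w : ι → ℝ} (hw : IsProbVec w) (L : ι → ℝ) (θ a b : ℝ)
    (ha : a < rmMu w L θ) (hb : rmMu w L θ < b) :
    ∀ᶠ n : ℕ in Filter.atTop, 1 / 2 * Real.exp (n * rmK w L θ) ≤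
      ∑ f, if n * a < rmS L n f ∧ rmS L n f < n * b then
        kpow w n f * Real.exp (θ * rmS L n f) else 0 := by
  obtain ⟨h, h0, hh⟩ := rm_tail_up hw L θ b hb
  obtain ⟨g, g0, hg⟩ := rm_tail_down hw L θ a ha
  filter_upwards [rm_exp_ev _ _ (1 / 4) hh (by norm_num), rm_exp_ev _ _ (1 / 4) hg (by norm_num)]
    with n h1 h2
  have e1 := rm_sum_exp' hw L (θ + h) n (-(h * b))
  have e2 := rm_sum_exp' hw L (θ - g) n (g * a)
  have e0 := rm_sum_exp' hw L θ n 0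
  rw [← sub_eq_add_neg] at e1
  rw [add_zero] at e0
  have key : ∑ f, kpow w n f * Real.exp (θ * rmS L n f + n * 0) ≤
      ∑ f, ((if n * a < rmS L n f ∧ rmS L n f < n * b then
        kpow w n f * Real.exp (θ * rmS L n f) else 0) +
        kpow w n f * Real.exp ((θ + h) * rmS L n f + n * (-(h * b))) +
        kpow w n f * Real.exp ((θ - g) * rmS L n f + n * (g * a))) := by
    refine Finset.sum_le_sum fun f _ => ?_
    have hk := kpow_nonneg hw.1 n f
    have p1 := mul_nonneg hk (Real.exp_pos ((θ + h) * rmS L n f + n * (-(h * b)))).le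
    have p2 := mul_nonneg hk (Real.exp_pos ((θ - g) * rmS L n f + n * (g * a))).le
    have e : θ * rmS L n f + n * 0 = θ * rmS L n f := by ring
    rw [e]
    split_ifs with hc
    · linarith
    · by_cases hc1 : n * a < rmS L n f
      · have hc2 : n * b ≤ rmS L n f := by
          by_contra hcc
          exact hc ⟨hc1, not_le.1 hcc⟩
        have : kpow w n f * Real.exp (θ * rmS L n f) ≤
            kpow w n f * Real.exp ((θ + h) * rmS L n f + n * (-(h * b))) := by
          refine mul_le_mul_of_nonneg_left (Real.exp_le_exp.2 ?_) hk
          nlinarith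
        linarith
      · have hc2 := not_lt.1 hc1
        have : kpow w n f * Real.exp (θ * rmS L n f) ≤
            kpow w n f * Real.exp ((θ - g) * rmS L n f + n * (g * a)) := by
          refine mul_le_mul_of_nonneg_left (Real.exp_le_exp.2 ?_) hk
          nlinarith
        linarith
  rw [Finset.sum_add_distrib, Finset.sum_add_distrib, e0, e1, e2] at key
  linarith

lemma rmP_lower {ι : Type*} [Fintype ι] {w : ι → ℝ} (hw : IsProbVec w) (L : ι → ℝ)
    (θ a b c : ℝ) (hθ : 1 ≤ θ) (ha : a < rmMu w L θ) (hb : rmMu w L θ < b) (hc : c < a) :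
    ∀ᶠ n : ℕ in Filter.atTop,
      1 / 4 * Real.exp (n * (rmK w L θ + (1 - θ) * b)) ≤ rmP w L n c := by
  filter_upwards [rm_conc hw L θ a b ha hb, rm_exp_ev c a (1 / 2) hc (by norm_num)] with n h1 h2
  have h3 : (∑ f, if n * a < rmS L n f ∧ rmS L n f < n * b then
        kpow w n f * Real.exp (θ * rmS L n f) else 0) *
          (1 / 2 * Real.exp (n * ((1 - θ) * b))) ≤ rmP w L n c := by
    rw [Finset.sum_mul]
    refine Finset.sum_le_sum fun f _ => ?_
    have hk := kpow_nonneg hw.1 n f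
    split_ifs with hf
    · obtain ⟨hf1, hf2⟩ := hf
      rw [mul_assoc]
      refine mul_le_mul_of_nonneg_left ?_ hk
      refine le_trans ?_ (le_max_right _ _)
      have i1 : Real.exp (n * a) ≤ Real.exp (rmS L n f) := Real.exp_le_exp.2 hf1.le
      have i2 : Real.exp (θ * rmS L n f) * Real.exp (n * ((1 - θ) * b)) ≤
          Real.exp (rmS L n f) := by
        rw [← Real.exp_add]
        apply Real.exp_le_exp.2
        nlinarith
      linarith
    · rw [zero_mul]
      exact mul_nonneg hk (le_max_left _ _)
  refine le_trans ?_ h3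
  refine le_trans (le_of_eq ?_) (mul_le_mul_of_nonneg_right h1 (by positivity))
  rw [mul_add, Real.exp_add]; ring

lemma rmZ_lower {ι : Type*} [Fintype ι] {w : ι → ℝ} (hw : IsProbVec w) (L : ι → ℝ)
    (θ a b c : ℝ) (hθ : 0 ≤ θ) (hθ' : θ ≤ 1) (ha : a < rmMu w L θ) (hb : rmMu w L θ < b) :
    ∀ᶠ n : ℕ in Filter.atTop,
      1 / 2 * Real.exp (n * (rmK w L θ + min ((1 - θ) * a) (c - θ * b))) ≤ rmZ w L n c := by
  filter_upwards [rm_conc hw L θ a b ha hb] with n h1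
  have hn : (0 : ℝ) ≤ n := Nat.cast_nonneg n
  have h3 : (∑ f, if n * a < rmS L n f ∧ rmS L n f < n * b then
        kpow w n f * Real.exp (θ * rmS L n f) else 0) *
          (Real.exp (n * min ((1 - θ) * a) (c - θ * b))) ≤ rmZ w L n c := by
    rw [Finset.sum_mul]
    refine Finset.sum_le_sum fun f _ => ?_
    have hk := kpow_nonneg hw.1 n f
    split_ifs with hf
    · obtain ⟨hf1, hf2⟩ := hf
      rw [mul_assoc]
      refine mul_le_mul_of_nonneg_left ?_ hk
      rw [← Real.exp_add]
      have m1 := mul_le_mul_of_nonneg_left (min_le_left ((1 - θ) * a) (c - θ * b)) hn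
      have m2 := mul_le_mul_of_nonneg_left (min_le_right ((1 - θ) * a) (c - θ * b)) hn
      apply le_min
      · apply Real.exp_le_exp.2
        nlinarith
      · apply Real.exp_le_exp.2
        nlinarith
    · rw [zero_mul]
      exact mul_nonneg hk (le_min (Real.exp_pos _).le (Real.exp_pos _).le)
  refine le_trans ?_ h3
  refine le_trans (le_of_eq ?_) (mul_le_mul_of_nonneg_right h1 (by positivity))
  rw [mul_add, Real.exp_add]; ring

lemma rmP_anti {ι : Type*} [Fintype ι] {w : ι → ℝ} (hw : IsProbVec w) (L : ι → ℝ) (n : ℕ)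
    {c c' : ℝ} (h : c ≤ c') : rmP w L n c' ≤ rmP w L n c := by
  refine Finset.sum_le_sum fun f _ => mul_le_mul_of_nonneg_left ?_ (kpow_nonneg hw.1 n f)
  have : Real.exp (n * c) ≤ Real.exp (n * c') :=
    Real.exp_le_exp.2 (mul_le_mul_of_nonneg_left h (Nat.cast_nonneg n))
  exact max_le_max le_rfl (by linarith)

lemma rmZ_mono {ι : Type*} [Fintype ι] {w : ι → ℝ} (hw : IsProbVec w) (L : ι → ℝ) (n : ℕ)
    {c c' : ℝ} (h : c ≤ c') : rmZ w L n c ≤ rmZ w L n c' := by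
  refine Finset.sum_le_sum fun f _ => mul_le_mul_of_nonneg_left ?_ (kpow_nonneg hw.1 n f)
  have : Real.exp (n * c) ≤ Real.exp (n * c') :=
    Real.exp_le_exp.2 (mul_le_mul_of_nonneg_left h (Nat.cast_nonneg n))
  exact min_le_min le_rfl this

lemma rmP_add_rmZ {ι : Type*} [Fintype ι] {w L : ι → ℝ}
    (h : ∑ i, w i * Real.exp (L i) = 1) (n : ℕ) (c : ℝ) : rmP w L n c + rmZ w L n c = 1 := by
  have h1 := rm_sum_exp w L 1 n
  have h2 : rmM w L 1 = 1 := by simp [rmM, h]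
  rw [h2, one_pow] at h1
  rw [← h1]
  unfold rmP rmZ
  rw [← Finset.sum_add_distrib]
  refine Finset.sum_congr rfl fun f _ => ?_
  rw [← mul_add, one_mul]
  congr 1
  rcases le_total (Real.exp (rmS L n f)) (Real.exp (n * c)) with h | h
  · rw [max_eq_left (by linarith), min_eq_left h]; ring
  · rw [max_eq_right (by linarith), min_eq_right h]; ring

lemma rm_exists_eps (F : ℝ → ℝ) (hF : Continuous F) (h0 : 0 < F 0) : ∃ ε, 0 < ε ∧ 0 < F ε := by
  have h := (hF.tendsto 0).mono_left (nhdsWithin_le_nhds (s := Set.Ioi 0))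
  obtain ⟨ε, h1, h2⟩ := ((h.eventually (lt_mem_nhds h0)).and self_mem_nhdsWithin).exists
  exact ⟨ε, h2, h1⟩

lemma rm_case1 {ι κ : Type*} [Fintype ι] [Fintype κ] {w L : ι → ℝ} {v G : κ → ℝ}
    (hw : IsProbVec w) (hv : IsProbVec v)
    (hv1 : ∑ i, v i * Real.exp (G i) = 1) (hw1 : ∑ i, w i * Real.exp (L i) = 1)
    (i j : ι) (hi : 0 < w i) (hj : 0 < w j) (c : ℝ) (hc : L i < c) (hc' : c < L j)
    (hK : ∀ θ, 1 < θ → rmK v G θ < rmK w L θ) (hmu : rmMu v G 1 < rmMu w L 1)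
    (hcm : rmMu w L 1 ≤ c) :
    ∃ U ∈ nhds c, ∀ᶠ n : ℕ in Filter.atTop, ∀ x ∈ U, rmP v G n x ≤ rmP w L n x := by
  obtain ⟨θ0, hθ0, hθmax⟩ := rmMu_sup hw L i j hi hj c hc hc'
  have h1 : 1 ≤ θ0 := by
    by_contra hcon
    have := hθmax 1 (not_le.1 hcon)
    linarith
  have h2 : ∃ θ2, 1 ≤ θ2 ∧ rmK v G θ2 + (1 - θ2) * c < rmK w L θ0 + (1 - θ0) * c := by
    rcases eq_or_lt_of_le h1 with h | h
    · obtain ⟨s, hs, hs'⟩ := rm_tail_up hv G 1 c (by linarith)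
      refine ⟨1 + s, by linarith, ?_⟩
      rw [← h, rmK_one hw1]
      rw [rmK_one hv1] at hs'
      linarith
    · exact ⟨θ0, h1, by linarith [hK θ0 h]⟩
  obtain ⟨θ2, hθ2, hlt⟩ := h2
  have hKc := rmK_cont hw L
  have hMc := rmMu_cont hw L
  obtain ⟨ε, hε, hF⟩ := rm_exists_eps (fun ε => rmK w L (θ0 + ε) +
      (1 - (θ0 + ε)) * (rmMu w L (θ0 + ε) + ε) - (rmK v G θ2 + (1 - θ2) * (c - ε)))
      (by fun_prop) (by simp only [add_zero, sub_zero, hθ0]; linarith)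
  have hgt := hθmax (θ0 + ε) (by linarith)
  set μ1 := rmMu w L (θ0 + ε) with hμ1
  refine ⟨Set.Ioo (c - ε) ((2 * c + μ1) / 3), Ioo_mem_nhds (by linarith) (by linarith), ?_⟩
  filter_upwards [rmP_lower hw L (θ0 + ε) ((c + 2 * μ1) / 3) (μ1 + ε) ((2 * c + μ1) / 3)
    (by linarith) (by linarith) (by linarith) (by linarith),
    rm_exp_ev (rmK v G θ2 + (1 - θ2) * (c - ε))
      (rmK w L (θ0 + ε) + (1 - (θ0 + ε)) * (μ1 + ε)) (1 / 4) (by linarith) (by norm_num)]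
    with n hn1 hn2 x hx
  calc rmP v G n x ≤ rmP v G n (c - ε) := rmP_anti hv G n hx.1.le
    _ ≤ _ := rmP_upper hv G θ2 hθ2 n _
    _ ≤ _ := hn2
    _ ≤ _ := hn1
    _ ≤ rmP w L n x := rmP_anti hw L n hx.2.le

lemma rm_case2 {ι κ : Type*} [Fintype ι] [Fintype κ] {w L : ι → ℝ} {v G : κ → ℝ}
    (hw : IsProbVec w) (hv : IsProbVec v)
    (hv1 : ∑ i, v i * Real.exp (G i) = 1) (hw1 : ∑ i, w i * Real.exp (L i) = 1)
    (c : ℝ) (hK : ∀ θ, 0 < θ → θ < 1 → rmK w L θ < rmK v G θ)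
    (hc0 : rmMu w L 0 < c) (hc1 : c < rmMu w L 1) :
    ∃ U ∈ nhds c, ∀ᶠ n : ℕ in Filter.atTop, ∀ x ∈ U, rmP v G n x ≤ rmP w L n x := by
  have h2 : ∃ θ1 θ2, 0 ≤ θ1 ∧ θ1 ≤ 1 ∧ 0 ≤ θ2 ∧ θ2 ≤ 1 ∧ rmK w L θ2 + (1 - θ2) * c <
      rmK v G θ1 + min ((1 - θ1) * rmMu v G θ1) (c - θ1 * rmMu v G θ1) := by
    by_cases ha : rmMu v G 1 ≤ c
    · have hs1 : ∃ r, 0 < r ∧ r ≤ 1 ∧ rmK w L (1 - r) + r * c < 0 := by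
        obtain ⟨ε, hε, hF⟩ := rm_exists_eps (fun ε => min (1 - ε) (rmMu w L (1 - ε) - c))
          (by have := rmMu_cont hw L; fun_prop) (by simp; linarith)
        have hF1 := lt_of_lt_of_le hF (min_le_left _ _)
        have hF2 := lt_of_lt_of_le hF (min_le_right _ _)
        refine ⟨ε, hε, by linarith, ?_⟩
        have := rmK_tangent hw L (1 - ε) 1
        rw [rmK_one hw1] at this
        nlinarith
      obtain ⟨r, hr, hr1, hr2⟩ := hs1
      refine ⟨1, 1 - r, by norm_num, le_rfl, by linarith, by linarith, ?_⟩
      rw [rmK_one hv1, min_eq_left (by linarith)]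
      linarith
    · by_cases hb : c ≤ rmMu v G 0
      · have hs1 : ∃ r, 0 < r ∧ r ≤ 1 ∧ rmK w L r - r * c < 0 := by
          obtain ⟨ε, hε, hF⟩ := rm_exists_eps (fun ε => min (1 - ε) (c - rmMu w L ε))
            (by have := rmMu_cont hw L; fun_prop) (by simp; linarith)
          have hF1 := lt_of_lt_of_le hF (min_le_left _ _)
          have hF2 := lt_of_lt_of_le hF (min_le_right _ _)
          refine ⟨ε, hε, by linarith, ?_⟩
          have := rmK_tangent hw L ε 0
          rw [rmK_zero hw] at this
          nlinarith
        obtain ⟨r, hr, hr1, hr2⟩ := hs1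
        refine ⟨0, r, le_rfl, by norm_num, by linarith, by linarith, ?_⟩
        rw [rmK_zero hv, min_eq_right (by linarith)]
        linarith
      · push Not at ha hb
        obtain ⟨θ, ⟨h0, h1⟩, hθ⟩ := intermediate_value_Ioo (zero_le_one' ℝ)
          (rmMu_cont hv G).continuousOn ⟨hb, ha⟩
        refine ⟨θ, θ, h0.le, h1.le, h0.le, h1.le, ?_⟩
        have e : c - θ * c = (1 - θ) * c := by ring
        rw [hθ, e, min_self]
        linarith [hK θ h0 h1]
  obtain ⟨θ1, θ2, h10, h11, h20, h21, hlt⟩ := h2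
  set μ1 := rmMu v G θ1 with hμ1
  obtain ⟨ε, hε, hF⟩ := rm_exists_eps (fun ε => rmK v G θ1 +
      min ((1 - θ1) * (μ1 - ε)) (c - ε - θ1 * (μ1 + ε)) - (rmK w L θ2 + (1 - θ2) * (c + ε)))
      (by fun_prop) (by simp only [add_zero, sub_zero]; linarith)
  refine ⟨Set.Ioo (c - ε) (c + ε), Ioo_mem_nhds (by linarith) (by linarith), ?_⟩
  filter_upwards [rmZ_lower hv G θ1 (μ1 - ε) (μ1 + ε) (c - ε) h10 h11 (by linarith) (by linarith),
    rm_exp_ev (rmK w L θ2 + (1 - θ2) * (c + ε))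
      (rmK v G θ1 + min ((1 - θ1) * (μ1 - ε)) (c - ε - θ1 * (μ1 + ε))) (1 / 2)
      (by linarith) (by norm_num)] with n hn1 hn2 x hx
  have hZ : rmZ w L n x ≤ rmZ v G n x := by
    calc rmZ w L n x ≤ rmZ w L n (c + ε) := rmZ_mono hw L n hx.2.le
      _ ≤ _ := rmZ_upper hw L θ2 h20 h21 n _
      _ ≤ _ := hn2
      _ ≤ _ := hn1
      _ ≤ rmZ v G n x := rmZ_mono hv G n hx.1.le
  have := rmP_add_rmZ hw1 n x
  have := rmP_add_rmZ hv1 n x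
  linarith

/-- Swapped weights. -/
def rmSw {ι : Type*} (w L : ι → ℝ) : ι → ℝ := fun i => w i * Real.exp (L i)

lemma rmSw_prob {ι : Type*} [Fintype ι] {w L : ι → ℝ} (hw : IsProbVec w)
    (hw1 : ∑ i, w i * Real.exp (L i) = 1) : IsProbVec (rmSw w L) :=
  ⟨fun i => mul_nonneg (hw.1 i) (Real.exp_pos _).le, hw1⟩

lemma rmSw_sum {ι : Type*} [Fintype ι] {w L : ι → ℝ} (hw : IsProbVec w) :
    ∑ i, rmSw w L i * Real.exp (-L i) = 1 := by
  rw [← hw.2]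
  refine Finset.sum_congr rfl fun i _ => ?_
  unfold rmSw
  rw [mul_assoc, ← Real.exp_add]; simp

lemma rmM_swap {ι : Type*} [Fintype ι] (w L : ι → ℝ) (θ : ℝ) :
    rmM (rmSw w L) (fun i => -L i) θ = rmM w L (1 - θ) := by
  unfold rmM rmSw
  refine Finset.sum_congr rfl fun i _ => ?_
  rw [mul_assoc, ← Real.exp_add]; ring_nf

lemma rmK_swap {ι : Type*} [Fintype ι] (w L : ι → ℝ) (θ : ℝ) :
    rmK (rmSw w L) (fun i => -L i) θ = rmK w L (1 - θ) := by
  unfold rmK; rw [rmM_swap]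

lemma rmMu_swap {ι : Type*} [Fintype ι] (w L : ι → ℝ) (θ : ℝ) :
    rmMu (rmSw w L) (fun i => -L i) θ = -rmMu w L (1 - θ) := by
  unfold rmMu
  rw [rmM_swap, ← neg_div, ← Finset.sum_neg_distrib]
  congr 1
  refine Finset.sum_congr rfl fun i _ => ?_
  unfold rmSw
  have : Real.exp ((1 - θ) * L i) = Real.exp (L i) * Real.exp (θ * -L i) := by
    rw [← Real.exp_add]; ring_nf
  rw [this]; ring

lemma rmP_swap {ι : Type*} [Fintype ι] {w L : ι → ℝ} (hw : IsProbVec w)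
    (hw1 : ∑ i, w i * Real.exp (L i) = 1) (n : ℕ) (c : ℝ) :
    Real.exp (n * c) * rmP (rmSw w L) (fun i => -L i) n (-c) =
      rmP w L n c - 1 + Real.exp (n * c) := by
  have h1 := rm_sum_exp w L 1 n
  have h2 : rmM w L 1 = 1 := by simp [rmM, hw1]
  have h0 := rm_sum_exp w L 0 n
  have h3 : rmM w L 0 = 1 := by simp [rmM, hw.2]
  rw [h2, one_pow] at h1
  rw [h3, one_pow] at h0
  have e : rmP w L n c - 1 + Real.exp (n * c) = rmP w L n c -
      ∑ f, kpow w n f * Real.exp (1 * rmS L n f) +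
      Real.exp (n * c) * ∑ f, kpow w n f * Real.exp (0 * rmS L n f) := by
    rw [h1, h0, mul_one]
  rw [e]
  unfold rmP
  rw [Finset.mul_sum, Finset.mul_sum, ← Finset.sum_sub_distrib, ← Finset.sum_add_distrib]
  refine Finset.sum_congr rfl fun f _ => ?_
  have hk : kpow (rmSw w L) n f = kpow w n f * Real.exp (rmS L n f) := by
    have := rm_kpow_exp w L 1 n f
    simp only [one_mul] at this
    exact this
  have hS : rmS (fun i => -L i) n f = -rmS L n f := by simp [rmS]
  rw [hk, hS, one_mul, zero_mul, Real.exp_zero, mul_one, mul_neg]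
  have p1 := Real.exp_pos (rmS L n f)
  have p2 := Real.exp_pos (n * c)
  rcases le_total (rmS L n f) (n * c) with h | h
  · have i1 := Real.exp_le_exp.2 h
    have i2 := Real.exp_le_exp.2 (neg_le_neg h)
    rw [max_eq_right (by linarith), max_eq_left (by linarith), Real.exp_neg, Real.exp_neg]
    field_simp
    ring
  · have i1 := Real.exp_le_exp.2 h
    have i2 := Real.exp_le_exp.2 (neg_le_neg h)
    rw [max_eq_left (by linarith), max_eq_right (by linarith)]
    ring

lemma rmP_swap_le {ι κ : Type*} [Fintype ι] [Fintype κ] {w L : ι → ℝ} {v G : κ → ℝ}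
    (hw : IsProbVec w) (hv : IsProbVec v)
    (hv1 : ∑ i, v i * Real.exp (G i) = 1) (hw1 : ∑ i, w i * Real.exp (L i) = 1) (n : ℕ) (c : ℝ)
    (h : rmP (rmSw v G) (fun i => -G i) n (-c) ≤ rmP (rmSw w L) (fun i => -L i) n (-c)) :
    rmP v G n c ≤ rmP w L n c := by
  have h1 := rmP_swap hw hw1 n c
  have h2 := rmP_swap hv hv1 n c
  have := mul_le_mul_of_nonneg_left h (Real.exp_pos (n * c)).le
  linarith

lemma rmP_zero {ι : Type*} [Fintype ι] {w L : ι → ℝ} (hw : IsProbVec w) (B : ℝ)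
    (hB : ∀ i, 0 < w i → L i ≤ B) (n : ℕ) (c : ℝ) (hc : B ≤ c) : rmP w L n c = 0 := by
  refine Finset.sum_eq_zero fun f _ => ?_
  by_cases hf : ∃ j, w (f j) = 0
  · obtain ⟨j, hj⟩ := hf
    have : kpow w n f = 0 := Finset.prod_eq_zero (Finset.mem_univ j) hj
    rw [this, zero_mul]
  · push Not at hf
    have : rmS L n f ≤ n * c := by
      have h1 : rmS L n f ≤ ∑ _j : Fin n, c := Finset.sum_le_sum fun j _ =>
        (hB _ (lt_of_le_of_ne (hw.1 _) (hf j).symm)).trans hc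
      simpa using h1
    have := Real.exp_le_exp.2 this
    rw [max_eq_left (by linarith), mul_zero]

lemma rmP_nonneg {ι : Type*} [Fintype ι] {w L : ι → ℝ} (hw : IsProbVec w) (n : ℕ) (c : ℝ) :
    0 ≤ rmP w L n c :=
  Finset.sum_nonneg fun f _ => mul_nonneg (kpow_nonneg hw.1 n f) (le_max_left _ _)

/-- Eventual domination of hockey-stick divergences. -/
lemma rm_main {ι κ : Type*} [Fintype ι] [Fintype κ] {w L : ι → ℝ} {v G : κ → ℝ}
    (hw : IsProbVec w) (hv : IsProbVec v)
    (hv1 : ∑ i, v i * Real.exp (G i) = 1) (hw1 : ∑ i, w i * Real.exp (L i) = 1)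
    (i j : ι) (hi : 0 < w i) (hj : 0 < w j) (A B : ℝ) (hA : L i < A) (hB : B < L j)
    (hGA : ∀ k, 0 < v k → A ≤ G k) (hGB : ∀ k, 0 < v k → G k ≤ B)
    (hK1 : ∀ θ, 1 < θ → rmK v G θ < rmK w L θ)
    (hK0 : ∀ θ, θ < 0 → rmK v G θ < rmK w L θ)
    (hK : ∀ θ, 0 < θ → θ < 1 → rmK w L θ < rmK v G θ)
    (hmu1 : rmMu v G 1 < rmMu w L 1) (hmu0 : rmMu w L 0 < rmMu v G 0) :
    ∀ᶠ n : ℕ in Filter.atTop, ∀ c, rmP v G n c ≤ rmP w L n c := by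
  have hloc : ∀ c ∈ Set.Icc A B,
      ∃ U ∈ nhds c, ∀ᶠ n : ℕ in Filter.atTop, ∀ x ∈ U, rmP v G n x ≤ rmP w L n x := by
    rintro c ⟨hcA, hcB⟩
    by_cases h1 : rmMu w L 1 ≤ c
    · exact rm_case1 hw hv hv1 hw1 i j hi hj c (by linarith) (by linarith) hK1 hmu1 h1
    by_cases h0 : c ≤ rmMu w L 0
    · obtain ⟨U, hU, hn⟩ := rm_case1 (w := rmSw w L) (L := fun i => -L i) (v := rmSw v G)
        (G := fun i => -G i) (rmSw_prob hw hw1) (rmSw_prob hv hv1) (rmSw_sum hv) (rmSw_sum hw)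
        j i (mul_pos hj (Real.exp_pos _)) (mul_pos hi (Real.exp_pos _)) (-c) (by linarith)
        (by linarith) (by
          intro θ hθ
          rw [rmK_swap, rmK_swap]
          exact hK0 _ (by linarith)) (by
          rw [rmMu_swap, rmMu_swap, sub_self]; linarith) (by
          rw [rmMu_swap, sub_self]; linarith)
      refine ⟨Neg.neg ⁻¹' U, continuous_neg.continuousAt.preimage_mem_nhds hU, ?_⟩
      filter_upwards [hn] with n hn x hx
      exact rmP_swap_le hw hv hv1 hw1 n x (hn _ hx)
    · exact rm_case2 hw hv hv1 hw1 c hK (not_le.1 h0) (not_le.1 h1)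
  have hcomp : ∀ᶠ n : ℕ in Filter.atTop, ∀ x ∈ Set.Icc A B, rmP v G n x ≤ rmP w L n x := by
    refine (isCompact_Icc (a := A) (b := B)).induction_on
      (p := fun S => ∀ᶠ n : ℕ in Filter.atTop, ∀ x ∈ S, rmP v G n x ≤ rmP w L n x) ?_ ?_ ?_ ?_
    · simp
    · intro s t hst h
      filter_upwards [h] with n hn x hx using hn x (hst hx)
    · intro s t hs ht
      filter_upwards [hs, ht] with n h1 h2 x hx
      exact hx.elim (h1 x) (h2 x)
    · intro x hx
      obtain ⟨U, hU, h⟩ := hloc x hx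
      exact ⟨U, mem_nhdsWithin_of_mem_nhds hU, h⟩
  filter_upwards [hcomp] with n hn c
  by_cases hcB : B ≤ c
  · rw [rmP_zero hv B hGB n c hcB]
    exact rmP_nonneg hw n c
  by_cases hcA : c ≤ A
  · apply rmP_swap_le hw hv hv1 hw1 n c
    rw [rmP_zero (rmSw_prob hv hv1) (-A) (fun k hk => by
      have : 0 < v k := by
        unfold rmSw at hk
        exact pos_of_mul_pos_left hk (Real.exp_pos _).le
      linarith [hGA k this]) n (-c) (by linarith)]
    exact rmP_nonneg (rmSw_prob hw hw1) n _
  · exact hn c ⟨(not_le.1 hcA).le, (not_le.1 hcB).le⟩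

/-- Log-likelihood ratio. -/
def rmL {m : ℕ} (p1 p2 : Fin m → ℝ) : Fin m → ℝ := fun i => Real.log (p1 i / p2 i)

lemma rmL_mul {m : ℕ} {p1 p2 : Fin m → ℝ} (hp1 : IsProbVec p1) (hp2 : IsProbVec p2)
    (hps : ∀ i, p1 i ≠ 0 ↔ p2 i ≠ 0) (i : Fin m) : p2 i * Real.exp (rmL p1 p2 i) = p1 i := by
  by_cases h : p2 i = 0
  · have : p1 i = 0 := by
      by_contra hc
      exact (hps i).1 hc h
    rw [h, this, zero_mul]
  · have h1 : 0 < p1 i := lt_of_le_of_ne (hp1.1 i) ((hps i).2 h).symm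
    have h2 : 0 < p2 i := lt_of_le_of_ne (hp2.1 i) (Ne.symm h)
    unfold rmL
    rw [Real.exp_log (div_pos h1 h2)]
    field_simp

lemma rmL_swap {m : ℕ} (p1 p2 : Fin m → ℝ) (i : Fin m) : rmL p2 p1 i = -rmL p1 p2 i := by
  unfold rmL
  rw [← Real.log_inv, inv_div]

lemma rm_renyi1 {m : ℕ} {p1 p2 : Fin m → ℝ} (hp1 : IsProbVec p1) (hp2 : IsProbVec p2)
    (hps : ∀ i, p1 i ≠ 0 ↔ p2 i ≠ 0) (α : ℝ) (hα : α ≠ 1) :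
    Renyi α p1 p2 = (1 / (α - 1)) * rmK p2 (rmL p1 p2) α := by
  unfold Renyi rmK rmM
  rw [if_neg hα]
  congr 2
  refine Finset.sum_congr rfl fun i _ => ?_
  by_cases h : p1 i = 0
  · have : p2 i = 0 := by
      by_contra hc
      exact (hps i).2 hc h
    rw [if_pos h, this, zero_mul]
  · have h1 : 0 < p1 i := lt_of_le_of_ne (hp1.1 i) (Ne.symm h)
    have h2 : 0 < p2 i := lt_of_le_of_ne (hp2.1 i) ((hps i).1 h).symm
    rw [if_neg h, Real.rpow_def_of_pos h1, Real.rpow_def_of_pos h2]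
    unfold rmL
    rw [Real.log_div h1.ne' h2.ne']
    nth_rewrite 2 [← Real.exp_log h2]
    rw [← Real.exp_add, ← Real.exp_add]
    congr 1
    ring

lemma rm_renyi2 {m : ℕ} {p1 p2 : Fin m → ℝ} (hp1 : IsProbVec p1) (hp2 : IsProbVec p2)
    (hps : ∀ i, p1 i ≠ 0 ↔ p2 i ≠ 0) (α : ℝ) (hα : α ≠ 1) :
    Renyi α p2 p1 = (1 / (α - 1)) * rmK p2 (rmL p1 p2) (1 - α) := by
  rw [rm_renyi1 hp2 hp1 (fun i => (hps i).symm) α hα, ← rmK_swap]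
  have e1 : rmSw p2 (rmL p1 p2) = p1 := funext fun i => rmL_mul hp1 hp2 hps i
  have e2 : rmL p2 p1 = fun i => -rmL p1 p2 i := funext fun i => rmL_swap p1 p2 i
  rw [e1, e2]

lemma rm_kl1 {m : ℕ} {p1 p2 : Fin m → ℝ} (hp1 : IsProbVec p1) (hp2 : IsProbVec p2)
    (hps : ∀ i, p1 i ≠ 0 ↔ p2 i ≠ 0) : Renyi 1 p1 p2 = rmMu p2 (rmL p1 p2) 1 := by
  have hM : rmM p2 (rmL p1 p2) 1 = 1 := by
    unfold rmM
    refine Eq.trans ?_ hp1.2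
    refine Finset.sum_congr rfl fun i _ => ?_
    rw [one_mul, rmL_mul hp1 hp2 hps]
  unfold Renyi rmMu
  rw [if_pos rfl, hM, div_one]
  refine Finset.sum_congr rfl fun i _ => ?_
  rw [one_mul, mul_right_comm, rmL_mul hp1 hp2 hps]
  rfl

lemma rm_kl2 {m : ℕ} {p1 p2 : Fin m → ℝ} (hp2 : IsProbVec p2) :
    Renyi 1 p2 p1 = -rmMu p2 (rmL p1 p2) 0 := by
  have hM : rmM p2 (rmL p1 p2) 0 = 1 := by
    simp [rmM, hp2.2]
  unfold Renyi rmMu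
  rw [if_pos rfl, hM, div_one, ← Finset.sum_neg_distrib]
  refine Finset.sum_congr rfl fun i _ => ?_
  have := rmL_swap p1 p2 i
  rw [zero_mul, Real.exp_zero, mul_one, ← mul_neg, ← this]
  rfl

lemma rm_inf_le {m : ℕ} (p1 p2 : Fin m → ℝ) (i : Fin m) (hi : p2 i ≠ 0) :
    rmL p1 p2 i ≤ RenyiInf p1 p2 := by
  unfold RenyiInf
  have h := le_ciSup (f := fun i => ⨆ (_ : i ∈ Finset.univ.filter (fun i => p2 i ≠ 0)),
    Real.log (p1 i / p2 i)) (Set.finite_range _).bddAbove i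
  refine le_trans (le_of_eq ?_) h
  have hm : i ∈ Finset.univ.filter (fun i => p2 i ≠ 0) := by simp [hi]
  simp only [hm]
  simp [rmL]

lemma rm_inf_nonneg {m : ℕ} {p1 p2 : Fin m → ℝ} (hp1 : IsProbVec p1) (hp2 : IsProbVec p2)
    (hps : ∀ i, p1 i ≠ 0 ↔ p2 i ≠ 0) : 0 ≤ RenyiInf p1 p2 := by
  by_contra hc
  push Not at hc
  have hlt : ∑ i, p1 i < ∑ i, p2 i := by
    obtain ⟨k, hk⟩ := rm_exists_pos hp2
    refine Finset.sum_lt_sum (fun i _ => ?_) ⟨k, Finset.mem_univ _, ?_⟩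
    · rw [← rmL_mul hp1 hp2 hps i]
      by_cases h : p2 i = 0
      · simp [h]
      · have := rm_inf_le p1 p2 i h
        have : Real.exp (rmL p1 p2 i) ≤ 1 := Real.exp_le_one_iff.2 (by linarith)
        exact mul_le_of_le_one_right (hp2.1 i) this
    · rw [← rmL_mul hp1 hp2 hps k]
      have := rm_inf_le p1 p2 k hk.ne'
      have : Real.exp (rmL p1 p2 k) < 1 := Real.exp_lt_one_iff.2 (by linarith)
      exact mul_lt_of_lt_one_right hk this
  rw [hp1.2, hp2.2] at hlt
  exact lt_irrefl _ hlt

lemma rm_inf_exists {m : ℕ} {p1 p2 : Fin m → ℝ} (hp2 : IsProbVec p2) (x : ℝ) (hx : 0 ≤ x)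
    (h : x < RenyiInf p1 p2) : ∃ i, p2 i ≠ 0 ∧ x < rmL p1 p2 i := by
  obtain ⟨k, -⟩ := rm_exists_pos hp2
  have : Nonempty (Fin m) := ⟨k⟩
  unfold RenyiInf at h
  obtain ⟨i, hi⟩ := exists_lt_of_lt_ciSup h
  by_cases hp : p2 i = 0
  · exfalso
    simp [hp] at hi
    linarith
  · refine ⟨i, hp, ?_⟩
    have hm : i ∈ Finset.univ.filter (fun i => p2 i ≠ 0) := by simp [hp]
    simp only [hm] at hi
    simpa [rmL] using hi

lemma rm_hockey {m : ℕ} {p1 p2 : Fin m → ℝ} (hp1 : IsProbVec p1) (hp2 : IsProbVec p2)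
    (hps : ∀ i, p1 i ≠ 0 ↔ p2 i ≠ 0) (n : ℕ) (c : ℝ) :
    ∑ f, max 0 (kpow p1 n f - Real.exp (n * c) * kpow p2 n f) = rmP p2 (rmL p1 p2) n c := by
  refine Finset.sum_congr rfl fun f _ => ?_
  have h := rm_kpow_exp p2 (rmL p1 p2) 1 n f
  have e : (fun i => p2 i * Real.exp (1 * rmL p1 p2 i)) = p1 := by
    funext i
    rw [one_mul, rmL_mul hp1 hp2 hps]
  rw [e, one_mul] at h
  rw [h, mul_comm (Real.exp (n * c)), ← mul_sub, mul_max_of_nonneg _ _ (kpow_nonneg hp2.1 n f),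
    mul_zero]

lemma kpow_sum {m : ℕ} {p : Fin m → ℝ} (hp : IsProbVec p) (n : ℕ) : ∑ f, kpow p n f = 1 := by
  unfold kpow
  rw [← Fintype.sum_pow, hp.2, one_pow]

/-- **Asymptotic relative majorization (d = 2), sufficiency.**  If all Rényi
divergences of order `α ∈ [1/2, ∞]` (including the Kullback–Leibler divergence
at `α = 1` and the max-divergence at `α = ∞`) are strictly ordered in both
argument orders, then for every sufficiently large `n` a single stochastic
matrix carries `(p⁽¹⁾)^{⊗n}` to `(q⁽¹⁾)^{⊗n}` and `(p⁽²⁾)^{⊗n}` to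
`(q⁽²⁾)^{⊗n}`. -/
theorem relative_majorization_sufficient
    {m m' : ℕ} (p1 p2 : Fin m → ℝ) (q1 q2 : Fin m' → ℝ)
    (hp1 : IsProbVec p1) (hp2 : IsProbVec p2)
    (hq1 : IsProbVec q1) (hq2 : IsProbVec q2)
    (hps : ∀ i, p1 i ≠ 0 ↔ p2 i ≠ 0) (hqs : ∀ j, q1 j ≠ 0 ↔ q2 j ≠ 0)
    (hR : ∀ α : ℝ, 1 / 2 ≤ α →
      Renyi α q1 q2 < Renyi α p1 p2 ∧ Renyi α q2 q1 < Renyi α p2 p1)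
    (hRinf : RenyiInf q1 q2 < RenyiInf p1 p2 ∧ RenyiInf q2 q1 < RenyiInf p2 p1) :
    ∃ N : ℕ, ∀ n : ℕ, N ≤ n →
      ∃ T : (Fin n → Fin m') → (Fin n → Fin m) → ℝ,
        IsStochastic T ∧ matVec T (kpow p1 n) = kpow q1 n ∧
          matVec T (kpow p2 n) = kpow q2 n := by
  have hpl : ∑ i, p2 i * Real.exp (rmL p1 p2 i) = 1 := by
    rw [← hp1.2]
    exact Finset.sum_congr rfl fun i _ => rmL_mul hp1 hp2 hps i
  have hql : ∑ i, q2 i * Real.exp (rmL q1 q2 i) = 1 := by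
    rw [← hq1.2]
    exact Finset.sum_congr rfl fun i _ => rmL_mul hq1 hq2 hqs i
  have hps' : ∀ i, p2 i ≠ 0 ↔ p1 i ≠ 0 := fun i => (hps i).symm
  have hqs' : ∀ i, q2 i ≠ 0 ↔ q1 i ≠ 0 := fun i => (hqs i).symm
  obtain ⟨j, hj, hjL⟩ := rm_inf_exists hp2 _ (rm_inf_nonneg hq1 hq2 hqs) hRinf.1
  obtain ⟨i, hi, hiL⟩ := rm_inf_exists hp1 _ (rm_inf_nonneg hq2 hq1 hqs') hRinf.2
  rw [rmL_swap] at hiL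
  have hgt : ∀ α, 1 < α → rmK q2 (rmL q1 q2) α < rmK p2 (rmL p1 p2) α ∧
      rmK q2 (rmL q1 q2) (1 - α) < rmK p2 (rmL p1 p2) (1 - α) := by
    intro α hα
    obtain ⟨h1, h2⟩ := hR α (by linarith)
    rw [rm_renyi1 hp1 hp2 hps α hα.ne', rm_renyi1 hq1 hq2 hqs α hα.ne'] at h1
    rw [rm_renyi2 hp1 hp2 hps α hα.ne', rm_renyi2 hq1 hq2 hqs α hα.ne'] at h2
    have hpos : 0 < 1 / (α - 1) := by
      apply div_pos one_pos; linarith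
    exact ⟨lt_of_mul_lt_mul_left h1 hpos.le, lt_of_mul_lt_mul_left h2 hpos.le⟩
  have hlt : ∀ α, 1 / 2 ≤ α → α < 1 → rmK p2 (rmL p1 p2) α < rmK q2 (rmL q1 q2) α ∧
      rmK p2 (rmL p1 p2) (1 - α) < rmK q2 (rmL q1 q2) (1 - α) := by
    intro α hα0 hα
    obtain ⟨h1, h2⟩ := hR α hα0
    rw [rm_renyi1 hp1 hp2 hps α hα.ne, rm_renyi1 hq1 hq2 hqs α hα.ne] at h1
    rw [rm_renyi2 hp1 hp2 hps α hα.ne, rm_renyi2 hq1 hq2 hqs α hα.ne] at h2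
    have hneg : 1 / (α - 1) < 0 := by
      apply div_neg_of_pos_of_neg one_pos; linarith
    exact ⟨lt_of_mul_lt_mul_of_nonpos_left h1 hneg.le,
      lt_of_mul_lt_mul_of_nonpos_left h2 hneg.le⟩
  obtain ⟨hk1, hk2⟩ := hR 1 (by norm_num)
  rw [rm_kl1 hp1 hp2 hps, rm_kl1 hq1 hq2 hqs] at hk1
  rw [rm_kl2 hp2, rm_kl2 hq2] at hk2
  have hmain := rm_main hp2 hq2 hql hpl i j
    (lt_of_le_of_ne (hp2.1 i) ((hps i).1 hi).symm) (lt_of_le_of_ne (hp2.1 j) hj.symm)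
    (-RenyiInf q2 q1) (RenyiInf q1 q2) (by linarith) hjL
    (fun k hk => by
      have := rm_inf_le q2 q1 k ((hqs k).2 hk.ne')
      rw [rmL_swap] at this
      linarith)
    (fun k hk => rm_inf_le q1 q2 k hk.ne')
    (fun θ hθ => (hgt θ hθ).1)
    (fun θ hθ => by
      have := (hgt (1 - θ) (by linarith)).2
      rwa [sub_sub_cancel] at this)
    (fun θ h0 h1 => by
      rcases le_total (1 / 2) θ with h | h
      · exact (hlt θ h h1).1
      · have := (hlt (1 - θ) (by linarith) (by linarith)).2
        rwa [sub_sub_cancel] at this)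
    hk1 (by linarith)
  obtain ⟨N, hN⟩ := Filter.eventually_atTop.1 hmain
  refine ⟨N + 1, fun n hn => ?_⟩
  have hn0 : (0 : ℝ) < n := by
    have : 0 < n := by omega
    exact_mod_cast this
  obtain ⟨k0, -⟩ := rm_exists_pos hq1
  have : Nonempty (Fin n → Fin m') := ⟨fun _ => k0⟩
  refine rm_blackwell (kpow p1 n) (kpow p2 n) (kpow q1 n) (kpow q2 n) (kpow_nonneg hp2.1 n)
    (kpow_nonneg hq2.1 n) (by rw [kpow_sum hp1, kpow_sum hq1])
    (by rw [kpow_sum hp2, kpow_sum hq2]) ?_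
  intro t
  rcases le_or_gt t 0 with ht | ht
  · have e : ∀ {m : ℕ} {r1 r2 : Fin m → ℝ}, IsProbVec r1 → IsProbVec r2 →
        ∑ f, max 0 (kpow r1 n f - t * kpow r2 n f) = 1 - t := by
      intro m r1 r2 hr1 hr2
      have e1 : ∀ f, max 0 (kpow r1 n f - t * kpow r2 n f) = kpow r1 n f - t * kpow r2 n f := by
        intro f
        apply max_eq_right
        have := kpow_nonneg hr1.1 n f
        have := mul_nonneg_of_nonpos_of_nonpos ht (neg_nonpos.2 (kpow_nonneg hr2.1 n f))
        linarith
      rw [Finset.sum_congr rfl fun f _ => e1 f, Finset.sum_sub_distrib, ← Finset.mul_sum,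
        kpow_sum hr1, kpow_sum hr2, mul_one]
    rw [e hp1 hp2, e hq1 hq2]
  · have hc : t = Real.exp (n * (Real.log t / n)) := by
      rw [mul_div_cancel₀ _ hn0.ne', Real.exp_log ht]
    rw [hc, rm_hockey hp1 hp2 hps, rm_hockey hq1 hq2 hqs]
    exact hN n (by omega) _
end
end

section
/- Let p and q be finite probability vectors. Then the following are equivalent: (i) for every ε > 0 there exist a finite probability vector q' with ‖q − q'‖₁ ≤ ε (padding with zeros to compare different lengths) and an integer n ≥ 1 such that p^{⊗n} majorizes (q')^{⊗n}; (ii) for every ε > 0 there exist a finite probability vector q' with ‖q − q'‖₁ ≤ ε and a finite probability vector r such that p ⊗ r majorizes q' ⊗ r; (iii) Σ_i p_i^α ≥ Σ_i q_i^α for every α ∈ [1, ∞) (equivalently, H_α(p) ≤ H_α(q) for all Rényi parameters α ≥ 1). -/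
open scoped BigOperators NNReal

noncomputable section

namespace AN

lemma le_topSum {ι : Type*} [Fintype ι] (p : ι → ℝ) {k : ℕ} {S : Finset ι}
    (h : S.card ≤ k) : ∑ i ∈ S, p i ≤ topSum p k := by
  unfold topSum
  refine le_ciSup_of_le (Set.finite_range _).bddAbove S ?_
  rw [ciSup_pos (by simpa using h)]

lemma topSum_le {ι : Type*} [Fintype ι] (p : ι → ℝ) {k : ℕ} {c : ℝ} (hc : 0 ≤ c)
    (h : ∀ S : Finset ι, S.card ≤ k → ∑ i ∈ S, p i ≤ c) : topSum p k ≤ c := by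
  unfold topSum
  refine Real.iSup_le (fun S => ?_) hc
  exact Real.iSup_le (fun hS => h S hS) hc

lemma topSum_nonneg {ι : Type*} [Fintype ι] (p : ι → ℝ) (k : ℕ) : 0 ≤ topSum p k := by
  have := le_topSum p (k := k) (S := ∅) (by simp)
  simpa using this

/-- The variational formula for `topSum`, lower bound. -/
lemma exists_threshold {ι : Type*} [Fintype ι] (p : ι → ℝ) (hp : ∀ i, 0 ≤ p i) (k : ℕ) :
    ∃ t : ℝ, 0 ≤ t ∧ k * t + ∑ i, max (p i - t) 0 ≤ topSum p k := by
  classical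
  rcases Nat.eq_zero_or_pos k with rfl | hk
  · refine ⟨∑ i, p i, Finset.sum_nonneg fun i _ => hp i, ?_⟩
    have : ∀ i, max (p i - ∑ i, p i) 0 = 0 := fun i => by
      apply max_eq_right
      have := Finset.single_le_sum (fun i _ => hp i) (Finset.mem_univ i)
      linarith
    simp [this, topSum_nonneg]
  rcases lt_or_ge (Fintype.card ι) k with hc | hc
  · refine ⟨0, le_rfl, ?_⟩
    have h := le_topSum p (k := k) (S := Finset.univ) (by rw [Finset.card_univ]; exact hc.le)
    simpa [hp] using h
  have hne : (Finset.powersetCard k (Finset.univ : Finset ι)).Nonempty :=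
    Finset.powersetCard_nonempty.2 (by rwa [Finset.card_univ])
  obtain ⟨S, hS, hmax⟩ := Finset.exists_max_image _ (fun S => ∑ i ∈ S, p i) hne
  have hScard := (Finset.mem_powersetCard.1 hS).2
  have hSne : S.Nonempty := Finset.card_pos.1 (by omega)
  obtain ⟨i₀, hi₀, hmin⟩ := Finset.exists_min_image S p hSne
  have hout : ∀ j, j ∉ S → p j ≤ p i₀ := by
    intro j hj
    have hj' : j ∉ S.erase i₀ := fun h => hj (Finset.mem_of_mem_erase h)
    have h1 := hmax (insert j (S.erase i₀)) (by
      rw [Finset.mem_powersetCard]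
      refine ⟨Finset.subset_univ _, ?_⟩
      rw [Finset.card_insert_of_notMem hj', Finset.card_erase_of_mem hi₀]
      omega)
    rw [Finset.sum_insert hj'] at h1
    have h2 := Finset.add_sum_erase S p hi₀
    linarith
  refine ⟨p i₀, hp _, ?_⟩
  have h1 : ∑ i, max (p i - p i₀) 0 = ∑ i ∈ S, (p i - p i₀) := by
    rw [← Finset.sum_subset (Finset.subset_univ S)]
    · exact Finset.sum_congr rfl fun i hi => max_eq_left (by linarith [hmin i hi])
    · intro j _ hj
      exact max_eq_right (by linarith [hout j hj])
  rw [h1, Finset.sum_sub_distrib, Finset.sum_const, hScard, nsmul_eq_mul]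
  have := le_topSum p (k := k) (S := S) hScard.le
  linarith

lemma topSum_le_threshold {ι : Type*} [Fintype ι] (p : ι → ℝ) (k : ℕ) {t : ℝ} (ht : 0 ≤ t) :
    topSum p k ≤ k * t + ∑ i, max (p i - t) 0 := by
  have h0 : ∀ S : Finset ι, ∑ i ∈ S, max (p i - t) 0 ≤ ∑ i, max (p i - t) 0 := fun S =>
    Finset.sum_le_sum_of_subset_of_nonneg (Finset.subset_univ _) fun _ _ _ => le_max_right _ _
  refine topSum_le p (by have := h0 ∅; simp only [Finset.sum_empty] at this; positivity) ?_
  intro S hS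
  have h1 : ∑ i ∈ S, p i ≤ ∑ i ∈ S, (t + max (p i - t) 0) :=
    Finset.sum_le_sum fun i _ => by linarith [le_max_left (p i - t) 0]
  rw [Finset.sum_add_distrib, Finset.sum_const, nsmul_eq_mul] at h1
  have h2 : (S.card : ℝ) * t ≤ k * t := by gcongr
  linarith [h0 S]

lemma majorizes_of_pos {ι κ : Type*} [Fintype ι] [Fintype κ] (p : ι → ℝ) (q : κ → ℝ)
    (hp : ∀ i, 0 ≤ p i) (hs : ∑ i, p i = ∑ j, q j)
    (h : ∀ t : ℝ, 0 ≤ t → ∑ j, max (q j - t) 0 ≤ ∑ i, max (p i - t) 0) : Majorizes p q := by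
  refine ⟨hs, fun k => ?_⟩
  obtain ⟨t, ht, h1⟩ := exists_threshold p hp k
  linarith [topSum_le_threshold q k ht, h t ht]

lemma pos_of_majorizes {ι κ : Type*} [Fintype ι] [Fintype κ] (p : ι → ℝ) (q : κ → ℝ)
    (h : Majorizes p q) (t : ℝ) (ht : 0 ≤ t) :
    ∑ j, max (q j - t) 0 ≤ ∑ i, max (p i - t) 0 := by
  classical
  set S := Finset.univ.filter (fun j => t < q j) with hS
  have h1 : ∑ j, max (q j - t) 0 = ∑ j ∈ S, (q j - t) := by
    rw [hS, Finset.sum_filter]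
    refine Finset.sum_congr rfl fun j _ => ?_
    split_ifs with hj
    · exact max_eq_left (by linarith)
    · exact max_eq_right (by linarith)
  rw [h1, Finset.sum_sub_distrib, Finset.sum_const, nsmul_eq_mul]
  have h2 := le_topSum q (k := S.card) (S := S) le_rfl
  have h3 := h.2 S.card
  have h4 := topSum_le_threshold p S.card ht
  linarith

lemma ratio_topSum {ι : Type*} [Fintype ι] (p : ι → ℝ) (hp : ∀ i, 0 ≤ p i) (k : ℕ)
    (S : Finset ι) (l : ℝ) (hl0 : 0 ≤ l) (hl1 : l ≤ 1) (hlS : l * S.card ≤ k) :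
    l * ∑ i ∈ S, p i ≤ topSum p k := by
  obtain ⟨t, ht, h1⟩ := exists_threshold p hp k
  refine le_trans ?_ h1
  have h0 : ∑ i ∈ S, max (p i - t) 0 ≤ ∑ i, max (p i - t) 0 :=
    Finset.sum_le_sum_of_subset_of_nonneg (Finset.subset_univ _) fun _ _ _ => le_max_right _ _
  have h00 : 0 ≤ ∑ i ∈ S, max (p i - t) 0 := Finset.sum_nonneg fun _ _ => le_max_right _ _
  have h2 : ∑ i ∈ S, p i ≤ ∑ i ∈ S, (t + max (p i - t) 0) :=
    Finset.sum_le_sum fun i _ => by linarith [le_max_left (p i - t) 0]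
  rw [Finset.sum_add_distrib, Finset.sum_const, nsmul_eq_mul] at h2
  have h3 := mul_le_mul_of_nonneg_left h2 hl0
  have h4 := mul_le_mul_of_nonneg_right hlS ht
  have h5 := mul_le_mul_of_nonneg_right hl1 h00
  nlinarith

lemma sum_fin_succ_fun {ι : Type*} [Fintype ι] {M : Type*} [AddCommMonoid M] (n : ℕ)
    (F : (Fin (n + 1) → ι) → M) :
    ∑ x, F x = ∑ i, ∑ y : Fin n → ι, F (Fin.cons i y) := by
  rw [← (Fin.consEquiv (fun _ : Fin (n + 1) => ι)).sum_comp, Fintype.sum_prod_type]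
  rfl

lemma kpow_cons {ι : Type*} (p : ι → ℝ) (n : ℕ) (i : ι) (y : Fin n → ι) :
    kpow p (n + 1) (Fin.cons i y : Fin (n + 1) → ι) = p i * kpow p n y := by
  simp [kpow, Fin.prod_univ_succ]

lemma kpow_nonneg {ι : Type*} {p : ι → ℝ} (hp : ∀ i, 0 ≤ p i) (n : ℕ) (x : Fin n → ι) :
    0 ≤ kpow p n x := Finset.prod_nonneg fun _ _ => hp _

lemma sum_kpow {ι : Type*} [Fintype ι] (p : ι → ℝ) (n : ℕ) :
    ∑ x, kpow p n x = (∑ i, p i) ^ n := by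
  rw [Fintype.sum_pow]; rfl

lemma kpow_rpow {ι : Type*} {p : ι → ℝ} (hp : ∀ i, 0 ≤ p i) (n : ℕ) (x : Fin n → ι) (α : ℝ) :
    kpow p n x ^ α = kpow (fun i => p i ^ α) n x := by
  unfold kpow
  rw [Real.finsetProd_rpow _ _ (fun i _ => hp _)]

lemma variance_kpow {ι : Type*} [Fintype ι] (w L : ι → ℝ) (hw : IsProbVec w)
    (h0 : ∑ i, w i * L i = 0) (n : ℕ) :
    ∑ x, kpow w n x * (∑ j, L (x j)) = 0 ∧
    ∑ x, kpow w n x * (∑ j, L (x j)) ^ 2 = n * ∑ i, w i * L i ^ 2 := by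
  induction n with
  | zero => simp
  | succ n ih =>
    obtain ⟨ih1, ih2⟩ := ih
    have h1 : ∑ y, kpow w n y = 1 := by rw [sum_kpow, hw.2, one_pow]
    constructor
    · rw [sum_fin_succ_fun]
      simp only [kpow_cons, Fin.sum_univ_succ, Fin.cons_zero, Fin.cons_succ]
      have : ∀ i, ∑ y, w i * kpow w n y * (L i + ∑ j, L (y j)) = w i * L i := by
        intro i
        calc _ = w i * L i * ∑ y, kpow w n y + w i * ∑ y, kpow w n y * (∑ j, L (y j)) := by
              rw [Finset.mul_sum, Finset.mul_sum, ← Finset.sum_add_distrib]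
              exact Finset.sum_congr rfl fun y _ => by ring
          _ = _ := by rw [h1, ih1]; ring
      simp [this, h0]
    · rw [sum_fin_succ_fun]
      simp only [kpow_cons, Fin.sum_univ_succ, Fin.cons_zero, Fin.cons_succ]
      have : ∀ i, ∑ y, w i * kpow w n y * (L i + ∑ j, L (y j)) ^ 2 =
          w i * L i ^ 2 + w i * (n * ∑ i, w i * L i ^ 2) := by
        intro i
        calc _ = w i * L i ^ 2 * ∑ y, kpow w n y
              + 2 * w i * L i * ∑ y, kpow w n y * (∑ j, L (y j))
              + w i * ∑ y, kpow w n y * (∑ j, L (y j)) ^ 2 := by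
              rw [Finset.mul_sum, Finset.mul_sum, Finset.mul_sum, ← Finset.sum_add_distrib,
                ← Finset.sum_add_distrib]
              exact Finset.sum_congr rfl fun y _ => by ring
          _ = _ := by rw [h1, ih1, ih2]; ring
      simp only [this]
      rw [Finset.sum_add_distrib, ← Finset.sum_mul, hw.2]
      push_cast; ring

/-- The partition function. -/
def Zf {m : ℕ} (p : Fin m → ℝ) (α : ℝ) : ℝ := ∑ i, p i ^ α

/-- Mean log-value under the tilted distribution. -/
def af {m : ℕ} (p : Fin m → ℝ) (α : ℝ) : ℝ := ∑ i, p i ^ α / Zf p α * Real.log (p i)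

/-- Entropy of the tilted distribution. -/
def hf {m : ℕ} (p : Fin m → ℝ) (α : ℝ) : ℝ := Real.log (Zf p α) - α * af p α

lemma Zf_pos {m : ℕ} {p : Fin m → ℝ} (hp : IsProbVec p) (α : ℝ) : 0 < Zf p α := by
  have : ∃ i, 0 < p i := by
    by_contra! h
    have : ∑ i, p i ≤ 0 := Finset.sum_nonpos fun i _ => h i
    linarith [hp.2]
  obtain ⟨i, hi⟩ := this
  have h1 : p i ^ α ≤ Zf p α :=
    Finset.single_le_sum (f := fun i => p i ^ α) (fun i _ => Real.rpow_nonneg (hp.1 i) _)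
      (Finset.mem_univ i)
  exact lt_of_lt_of_le (Real.rpow_pos_of_pos hi α) h1

lemma tilt_prob {m : ℕ} {p : Fin m → ℝ} (hp : IsProbVec p) (α : ℝ) :
    IsProbVec (fun i => p i ^ α / Zf p α) := by
  refine ⟨fun i => div_nonneg (Real.rpow_nonneg (hp.1 i) _) (Zf_pos hp α).le, ?_⟩
  rw [← Finset.sum_div]
  exact div_self (Zf_pos hp α).ne'

lemma fA_eq {m : ℕ} {p : Fin m → ℝ} {α : ℝ} (hα : 1 ≤ α) : fA α p = Zf p α := by
  unfold fA Zf
  refine Finset.sum_congr rfl fun i _ => ?_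
  split_ifs with h
  · rw [h, Real.zero_rpow (by linarith)]
  · rfl

lemma hf_le {m : ℕ} {p : Fin m → ℝ} (hp : IsProbVec p) {α : ℝ} (hα : 1 ≤ α) : hf p α ≤ m := by
  have hZ := Zf_pos hp α
  have hw := tilt_prob hp α
  have h1 : hf p α = ∑ i, (p i ^ α / Zf p α) * (Real.log (Zf p α) - α * Real.log (p i)) := by
    simp only [mul_sub, Finset.sum_sub_distrib, ← Finset.sum_mul]
    rw [hw.2, hf, af, Finset.mul_sum, one_mul]
    congr 1
    exact Finset.sum_congr rfl fun i _ => by ring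
  rw [h1]
  have h2 : ∀ i ∈ (Finset.univ : Finset (Fin m)),
      (p i ^ α / Zf p α) * (Real.log (Zf p α) - α * Real.log (p i)) ≤ 1 := by
    intro i _
    rcases (hp.1 i).eq_or_lt with h | h
    · rw [← h, Real.zero_rpow (by linarith)]; simp
    · have h3 := Real.negMulLog_le_one_sub_self (hw.1 i)
      have h4 : Real.log (p i ^ α / Zf p α) = α * Real.log (p i) - Real.log (Zf p α) := by
        rw [Real.log_div (Real.rpow_pos_of_pos h _).ne' hZ.ne', Real.log_rpow h]
      have h5 := hw.1 i
      simp only at h5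
      rw [Real.negMulLog, h4] at h3
      linarith
  calc _ ≤ ∑ _i : Fin m, (1 : ℝ) := Finset.sum_le_sum h2
    _ = m := by simp

lemma hf_cont {m : ℕ} {p : Fin m → ℝ} (hp : IsProbVec p) (A : ℝ) :
    ContinuousOn (hf p) (Set.Icc 1 A) := by
  intro α hα
  apply ContinuousAt.continuousWithinAt
  have h1 : ∀ i, ContinuousAt (fun β : ℝ => p i ^ β) α := fun i =>
    Real.continuousAt_const_rpow' (by linarith [hα.1])
  have hZ : ContinuousAt (fun β : ℝ => Zf p β) α :=
    tendsto_finsetSum _ fun i _ => h1 i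
  have ha : ContinuousAt (fun β : ℝ => af p β) α :=
    tendsto_finsetSum _ fun i _ =>
      ((h1 i).div hZ (Zf_pos hp α).ne').mul continuousAt_const
  exact (hZ.log (Zf_pos hp α).ne').sub (continuousAt_id.mul ha)

lemma choose_alpha {m : ℕ} {p : Fin m → ℝ} (hp : IsProbVec p) {A κ : ℝ} (hA : 1 ≤ A)
    (hκ : 0 ≤ κ) :
    ∃ α : ℝ, 1 ≤ α ∧ α ≤ A ∧ -(m / A) ≤ min (hf p α - κ) 0 - (hf p α - κ) / α := by
  have hm : (0 : ℝ) ≤ m / A := by positivity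
  by_cases h1 : hf p 1 ≤ κ
  · refine ⟨1, le_rfl, hA, ?_⟩
    rw [min_eq_left (by linarith)]
    simpa using hm
  by_cases h2 : κ ≤ hf p A
  · refine ⟨A, hA, le_rfl, ?_⟩
    rw [min_eq_right (by linarith)]
    have : (hf p A - κ) / A ≤ m / A := by
      have := hf_le hp hA
      gcongr
      linarith
    linarith
  · push Not at h1 h2
    obtain ⟨α, hα, h⟩ := intermediate_value_Icc' hA (hf_cont hp A) ⟨h2.le, h1.le⟩
    refine ⟨α, hα.1, hα.2, ?_⟩
    rw [h]; simpa using hm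

lemma typical_set {m : ℕ} {p : Fin m → ℝ} (hp : IsProbVec p) {α B η : ℝ} (hα : 1 ≤ α)
    (hB : ∀ i, |Real.log (p i)| ≤ B) (hη : 0 < η) {n : ℕ} (hn : 1 ≤ n)
    (hnη : 8 * B ^ 2 ≤ n * η ^ 2) :
    ∃ S : Finset (Fin n → Fin m), (S.card : ℝ) ≤ Real.exp (n * (hf p α + α * η)) ∧
      1 / 2 * Real.exp (n * (hf p α + af p α - (α - 1) * η)) ≤ ∑ x ∈ S, kpow p n x := by
  classical
  have hZ := Zf_pos hp α
  have hw := tilt_prob hp α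
  have hn0 : (0 : ℝ) < n := by exact_mod_cast hn
  set w : Fin m → ℝ := fun i => p i ^ α / Zf p α with hwdef
  set a := af p α with ha
  set h := hf p α with hh
  have hlogZ : Real.log (Zf p α) = h + α * a := by rw [hh, hf]; ring
  have hma : ∑ i, w i * Real.log (p i) = a := rfl
  have hW : ∀ x, kpow w n x = kpow p n x ^ α / Zf p α ^ n := by
    intro x
    rw [kpow_rpow hp.1]
    simp [kpow, hwdef, Finset.prod_div_distrib]
  have hZn : Zf p α ^ n = Real.exp (n * (h + α * a)) := by
    rw [← hlogZ, Real.exp_nat_mul, Real.exp_log hZ]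
  have hsum : ∑ x, kpow w n x = 1 := by rw [sum_kpow, hw.2, one_pow]
  have hWnn : ∀ x, 0 ≤ kpow w n x := kpow_nonneg hw.1 n
  have haB : |a| ≤ B := by
    rw [← hma]
    calc |∑ i, w i * Real.log (p i)| ≤ ∑ i, |w i * Real.log (p i)| :=
          Finset.abs_sum_le_sum_abs _ _
      _ ≤ ∑ i, w i * B := Finset.sum_le_sum fun i _ => by
          rw [abs_mul, abs_of_nonneg (hw.1 i)]
          exact mul_le_mul_of_nonneg_left (hB i) (hw.1 i)
      _ = B := by rw [← Finset.sum_mul, hw.2, one_mul]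
  have hcent : ∑ i, w i * (Real.log (p i) - a) = 0 := by
    simp only [mul_sub, Finset.sum_sub_distrib, ← Finset.sum_mul]
    rw [hw.2, hma]; ring
  obtain ⟨-, hvar⟩ := variance_kpow w (fun i => Real.log (p i) - a) hw hcent n
  have hV : ∑ i, w i * (Real.log (p i) - a) ^ 2 ≤ 4 * B ^ 2 := by
    calc _ ≤ ∑ i, w i * (4 * B ^ 2) := Finset.sum_le_sum fun i _ => by
          refine mul_le_mul_of_nonneg_left ?_ (hw.1 i)
          have h1 : |Real.log (p i) - a| ≤ 2 * B := by
            have := abs_sub (Real.log (p i)) a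
            linarith [hB i]
          rw [← sq_abs]
          nlinarith [abs_nonneg (Real.log (p i) - a)]
      _ = _ := by rw [← Finset.sum_mul, hw.2, one_mul]
  set S : Finset (Fin n → Fin m) := Finset.univ.filter
    (fun x => kpow p n x ≠ 0 ∧ |∑ j, (Real.log (p (x j)) - a)| ≤ n * η) with hS
  have hSW : 1 / 2 ≤ ∑ x ∈ S, kpow w n x := by
    have h1 := Finset.sum_filter_add_sum_filter_not Finset.univ
      (fun x => kpow p n x ≠ 0 ∧ |∑ j, (Real.log (p (x j)) - a)| ≤ n * η) (kpow w n)
    rw [← hS, hsum] at h1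
    have h2 : (n * η) ^ 2 * ∑ x ∈ Finset.univ.filter
      (fun x => ¬ (kpow p n x ≠ 0 ∧ |∑ j, (Real.log (p (x j)) - a)| ≤ n * η)), kpow w n x
      ≤ n * (4 * B ^ 2) := by
      rw [Finset.mul_sum]
      calc _ ≤ ∑ x ∈ Finset.univ.filter
              (fun x => ¬ (kpow p n x ≠ 0 ∧ |∑ j, (Real.log (p (x j)) - a)| ≤ n * η)),
              kpow w n x * (∑ j, (Real.log (p (x j)) - a)) ^ 2 := by
            refine Finset.sum_le_sum fun x hx => ?_
            rw [Finset.mem_filter] at hx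
            by_cases h0 : kpow p n x = 0
            · rw [hW, h0, Real.zero_rpow (by linarith)]; simp
            · have h3 : ¬ |∑ j, (Real.log (p (x j)) - a)| ≤ n * η := fun h => hx.2 ⟨h0, h⟩
              push Not at h3
              rw [mul_comm]
              refine mul_le_mul_of_nonneg_left ?_ (hWnn x)
              rw [← sq_abs (∑ j, (Real.log (p (x j)) - a))]
              exact pow_le_pow_left₀ (by positivity) h3.le 2
        _ ≤ ∑ x, kpow w n x * (∑ j, (Real.log (p (x j)) - a)) ^ 2 :=
            Finset.sum_le_sum_of_subset_of_nonneg (Finset.subset_univ _) fun x _ _ =>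
              mul_nonneg (hWnn x) (sq_nonneg _)
        _ ≤ _ := by rw [hvar]; gcongr
    set R := ∑ x ∈ Finset.univ.filter
      (fun x => ¬ (kpow p n x ≠ 0 ∧ |∑ j, (Real.log (p (x j)) - a)| ≤ n * η)), kpow w n x with hR
    have h3 : (n * η) ^ 2 * R ≤ (n * η) ^ 2 * (1 / 2) := by
      refine h2.trans ?_
      nlinarith
    have h4 := le_of_mul_le_mul_left h3 (by positivity)
    linarith
  have hP : ∀ x ∈ S, ∃ l : ℝ, kpow p n x = Real.exp l ∧ n * (a - η) ≤ l ∧ l ≤ n * (a + η) := by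
    intro x hx
    rw [hS, Finset.mem_filter] at hx
    obtain ⟨-, h0, h1⟩ := hx
    have hpos : 0 < kpow p n x := lt_of_le_of_ne (kpow_nonneg hp.1 n x) (Ne.symm h0)
    refine ⟨∑ j, Real.log (p (x j)), ?_, ?_⟩
    · rw [← Real.log_prod]
      · exact (Real.exp_log hpos).symm
      · intro j _ hj
        exact h0 (Finset.prod_eq_zero (Finset.mem_univ j) hj)
    · rw [Finset.sum_sub_distrib] at h1
      simp only [Finset.sum_const, Finset.card_univ, Fintype.card_fin, nsmul_eq_mul] at h1
      rw [abs_le] at h1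
      constructor <;> linarith [h1.1, h1.2]
  have hWexp : ∀ x l, kpow p n x = Real.exp l →
      kpow w n x = Real.exp (α * l - n * (h + α * a)) := by
    intro x l hl
    rw [hW, hl, hZn, ← Real.exp_mul, ← Real.exp_sub]
    congr 1; ring
  refine ⟨S, ?_, ?_⟩
  · have h1 : (S.card : ℝ) * Real.exp (-(n * (h + α * η))) ≤ 1 := by
      calc _ = ∑ x ∈ S, Real.exp (-(n * (h + α * η))) := by
            rw [Finset.sum_const, nsmul_eq_mul]
        _ ≤ ∑ x ∈ S, kpow w n x := Finset.sum_le_sum fun x hx => by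
            obtain ⟨l, hl, hl1, hl2⟩ := hP x hx
            rw [hWexp x l hl]
            apply Real.exp_le_exp.2
            nlinarith
        _ ≤ ∑ x, kpow w n x :=
            Finset.sum_le_sum_of_subset_of_nonneg (Finset.subset_univ _) fun x _ _ => hWnn x
        _ = 1 := hsum
    rw [Real.exp_neg, ← div_eq_mul_inv, div_le_one (Real.exp_pos _)] at h1
    exact h1
  · calc _ ≤ (∑ x ∈ S, kpow w n x) * Real.exp (n * (h + a - (α - 1) * η)) := by gcongr
      _ = ∑ x ∈ S, kpow w n x * Real.exp (n * (h + a - (α - 1) * η)) := Finset.sum_mul ..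
      _ ≤ _ := Finset.sum_le_sum fun x hx => by
            obtain ⟨l, hl, hl1, hl2⟩ := hP x hx
            rw [hWexp x l hl, hl, ← Real.exp_add]
            apply Real.exp_le_exp.2
            nlinarith

lemma topSum_rpow_le {m : ℕ} {q : Fin m → ℝ} (hq : ∀ i, 0 ≤ q i) {α : ℝ} (hα : 1 ≤ α)
    (n k : ℕ) : topSum (kpow q n) k ^ α ≤ (k : ℝ) ^ (α - 1) * Zf q α ^ n := by
  have hα0 : 0 < α := by linarith
  have hZ : 0 ≤ Zf q α := Finset.sum_nonneg fun i _ => Real.rpow_nonneg (hq i) _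
  have hc : 0 ≤ (k : ℝ) ^ (α - 1) * Zf q α ^ n := by positivity
  suffices h : topSum (kpow q n) k ≤ ((k : ℝ) ^ (α - 1) * Zf q α ^ n) ^ (α⁻¹) by
    calc _ ≤ (((k : ℝ) ^ (α - 1) * Zf q α ^ n) ^ (α⁻¹)) ^ α :=
          Real.rpow_le_rpow (topSum_nonneg _ _) h hα0.le
      _ = _ := Real.rpow_inv_rpow hc hα0.ne'
  refine topSum_le _ (Real.rpow_nonneg hc _) fun S hS => ?_
  rw [Real.le_rpow_inv_iff_of_pos (Finset.sum_nonneg fun x _ => kpow_nonneg hq n x) hc hα0]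
  refine (Real.rpow_sum_le_const_mul_sum_rpow_of_nonneg S hα
    fun x _ => kpow_nonneg hq n x).trans ?_
  have h1 : ∑ x ∈ S, kpow q n x ^ α ≤ Zf q α ^ n := by
    calc _ ≤ ∑ x, kpow q n x ^ α :=
          Finset.sum_le_sum_of_subset_of_nonneg (Finset.subset_univ _) fun x _ _ =>
            Real.rpow_nonneg (kpow_nonneg hq n x) _
      _ = _ := by
          simp only [kpow_rpow hq]
          rw [sum_kpow]; rfl
  have h2 : (S.card : ℝ) ^ (α - 1) ≤ (k : ℝ) ^ (α - 1) :=
    Real.rpow_le_rpow (by positivity) (by exact_mod_cast hS) (by linarith)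
  exact mul_le_mul h2 h1 (Finset.sum_nonneg fun x _ => Real.rpow_nonneg (kpow_nonneg hq n x) _)
    (by positivity)

lemma key {m m' : ℕ} {p : Fin m → ℝ} {q : Fin m' → ℝ} (hp : IsProbVec p) (hq : IsProbVec q)
    (H : ∀ α : ℝ, 1 ≤ α → Zf q α ≤ Zf p α) {c : ℝ} (hc0 : 0 < c) (hc1 : c < 1) :
    ∃ n : ℕ, 1 ≤ n ∧ ∀ k : ℕ, 1 ≤ k →
      2 * c ^ n * topSum (kpow q n) k ≤ topSum (kpow p n) k := by
  set d := -Real.log c with hd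
  have hdpos : 0 < d := by have := Real.log_neg hc0 hc1; linarith
  set A : ℝ := 1 + 2 * m / d with hA
  have hA1 : 1 ≤ A := by have : (0 : ℝ) ≤ 2 * m / d := by positivity
                         linarith
  have hmA : m / A ≤ d / 2 := by
    rw [div_le_iff₀ (by linarith), hA]
    have : d / 2 * (1 + 2 * m / d) = d / 2 + m := by field_simp
    linarith
  set η := d / (8 * A) with hη
  have hηpos : 0 < η := by positivity
  have hAη : A * η = d / 8 := by rw [hη]; field_simp
  set B := ∑ i, |Real.log (p i)| with hBdef
  have hB : ∀ i, |Real.log (p i)| ≤ B := fun i =>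
    Finset.single_le_sum (f := fun i => |Real.log (p i)|) (fun i _ => abs_nonneg _)
      (Finset.mem_univ i)
  obtain ⟨n1, hn1⟩ := exists_nat_ge (8 * B ^ 2 / η ^ 2)
  obtain ⟨n2, hn2⟩ := exists_nat_ge (Real.log 4 / (d / 4))
  set n := n1 + n2 + 1 with hn
  have hnr : (n : ℝ) = n1 + n2 + 1 := by rw [hn]; push_cast; ring
  have hnB : 8 * B ^ 2 ≤ n * η ^ 2 := by
    rw [← div_le_iff₀ (by positivity), hnr]
    have : (0 : ℝ) ≤ n2 := by positivity
    linarith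
  have hnd : Real.log 4 ≤ n * (d / 4) := by
    rw [← div_le_iff₀ (by positivity), hnr]
    have : (0 : ℝ) ≤ n1 := by positivity
    linarith
  have hn0 : (0 : ℝ) < n := by rw [hnr]; positivity
  refine ⟨n, by omega, fun k hk => ?_⟩
  have hk0 : (0 : ℝ) < k := by exact_mod_cast hk
  set κ := Real.log k / n with hκ
  have hκ0 : 0 ≤ κ := div_nonneg (Real.log_natCast_nonneg k) hn0.le
  have hkexp : (k : ℝ) = Real.exp (n * κ) := by
    rw [hκ, mul_div_cancel₀ _ hn0.ne', Real.exp_log hk0]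
  obtain ⟨α, hα1, hαA, hα⟩ := choose_alpha hp hA1 hκ0
  have hα0 : 0 < α := by linarith
  obtain ⟨S, hScard, hSsum⟩ := typical_set hp hα1 hB hηpos (by omega : 1 ≤ n) hnB
  set h := hf p α with hh
  set a := af p α with ha
  have hαη : α * η ≤ d / 8 := by rw [← hAη]; gcongr
  have hαη0 : 0 ≤ α * η := by positivity
  -- lower bound
  set l := Real.exp (n * (min (κ - h) 0 - α * η)) with hl
  have hlow : l * (1 / 2 * Real.exp (n * (h + a - (α - 1) * η))) ≤ topSum (kpow p n) k := by
    have h1 := ratio_topSum (kpow p n) (kpow_nonneg hp.1 n) k S l (Real.exp_pos _).le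
      (by
        rw [hl, Real.exp_le_one_iff]
        refine mul_nonpos_of_nonneg_of_nonpos hn0.le ?_
        linarith [min_le_right (κ - h) 0])
      (by
        calc l * S.card ≤ l * Real.exp (n * (h + α * η)) := by gcongr
          _ = Real.exp (n * (min (κ - h) 0 + h)) := by
              rw [hl, ← Real.exp_add]; congr 1; ring
          _ ≤ Real.exp (n * κ) := by
              apply Real.exp_le_exp.2
              gcongr
              linarith [min_le_left (κ - h) 0]
          _ = k := hkexp.symm)
    exact (mul_le_mul_of_nonneg_left hSsum (Real.exp_pos _).le).trans h1
  -- upper bound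
  have hup : topSum (kpow q n) k ≤ Real.exp (n * (κ + a + (h - κ) / α)) := by
    rw [← Real.rpow_le_rpow_iff (topSum_nonneg _ _) (Real.exp_pos _).le hα0]
    refine (topSum_rpow_le hq.1 hα1 n k).trans ?_
    have hZ := Zf_pos hp α
    have hZq := Zf_pos hq α
    calc _ ≤ (k : ℝ) ^ (α - 1) * Zf p α ^ n := by
          have := H α hα1
          gcongr
      _ = Real.exp (n * κ * (α - 1)) * Real.exp (n * (h + α * a)) := by
          rw [hkexp, ← Real.exp_mul]
          congr 1
          have : h + α * a = Real.log (Zf p α) := by rw [hh, hf]; ring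
          rw [this, Real.exp_nat_mul, Real.exp_log hZ]
      _ = _ := by
          rw [← Real.exp_add, ← Real.exp_mul]
          congr 1
          field_simp
          ring
  have hcn : c ^ n = Real.exp (-(n * d)) := by
    rw [hd, mul_neg, neg_neg, Real.exp_nat_mul, Real.exp_log hc0]
  refine le_trans ?_ hlow
  have h4 : (4 : ℝ) ≤ Real.exp (n * (d / 4)) := by
    rw [← Real.log_le_iff_le_exp (by norm_num)]; exact hnd
  have hmin : min (κ - h) 0 + h = min (h - κ) 0 + κ := by
    rcases le_total κ h with hx | hx
    · rw [min_eq_left (by linarith), min_eq_right (by linarith)]; ring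
    · rw [min_eq_right (by linarith), min_eq_left (by linarith)]; ring
  have hfin : Real.exp (n * (d / 4)) * (Real.exp (-(n * d)) *
      Real.exp (n * (κ + a + (h - κ) / α))) ≤ l * Real.exp (n * (h + a - (α - 1) * η)) := by
    rw [hl, ← Real.exp_add, ← Real.exp_add, ← Real.exp_add]
    apply Real.exp_le_exp.2
    have : d / 4 - d + (κ + a + (h - κ) / α) ≤
      (min (κ - h) 0 - α * η) + (h + a - (α - 1) * η) := by
      have e1 : (α - 1) * η = α * η - η := by ring
      rw [e1]
      linarith
    calc _ = n * (d / 4 - d + (κ + a + (h - κ) / α)) := by ring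
      _ ≤ n * ((min (κ - h) 0 - α * η) + (h + a - (α - 1) * η)) :=
          mul_le_mul_of_nonneg_left this hn0.le
      _ = _ := by ring
  set X := Real.exp (-(n * d)) * Real.exp (n * (κ + a + (h - κ) / α)) with hX
  have hXpos : 0 < X := by positivity
  have h5 : c ^ n * topSum (kpow q n) k ≤ X := by
    rw [hcn, hX]; gcongr
  have h6 := mul_le_mul_of_nonneg_right h4 hXpos.le
  calc 2 * c ^ n * topSum (kpow q n) k = 2 * (c ^ n * topSum (kpow q n) k) := by ring
    _ ≤ 2 * X := by linarith
    _ ≤ 1 / 2 * (l * Real.exp (n * (h + a - (α - 1) * η))) := by linarith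
    _ = _ := by ring

lemma prob_le_one {ι : Type*} [Fintype ι] {p : ι → ℝ} (hp : IsProbVec p) (i : ι) : p i ≤ 1 := by
  rw [← hp.2]
  exact Finset.single_le_sum (fun i _ => hp.1 i) (Finset.mem_univ i)

lemma kron_prob {ι κ : Type*} [Fintype ι] [Fintype κ] {p : ι → ℝ} {q : κ → ℝ}
    (hp : IsProbVec p) (hq : IsProbVec q) : IsProbVec (kron p q) := by
  refine ⟨fun x => mul_nonneg (hp.1 _) (hq.1 _), ?_⟩
  simp only [kron, Fintype.sum_prod_type, ← Finset.mul_sum, hq.2, mul_one, hp.2]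

lemma kpow_prob {ι : Type*} [Fintype ι] {p : ι → ℝ} (hp : IsProbVec p) (n : ℕ) :
    IsProbVec (kpow p n) :=
  ⟨kpow_nonneg hp.1 n, by rw [sum_kpow, hp.2, one_pow]⟩

/-- The perturbed vector: shrink `q` and add `N` tiny entries. -/
def pert {m : ℕ} (q : Fin m → ℝ) (c : ℝ) (N : ℕ) : Fin (m + N) → ℝ :=
  Fin.append (fun i => c * q i) (fun _ => (1 - c) / N)

lemma pert_prob {m : ℕ} {q : Fin m → ℝ} (hq : IsProbVec q) {c : ℝ} (hc0 : 0 ≤ c) (hc1 : c ≤ 1)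
    {N : ℕ} (hN : 0 < N) : IsProbVec (pert q c N) := by
  have hN' : (0 : ℝ) < N := by exact_mod_cast hN
  refine ⟨fun i => ?_, ?_⟩
  · refine Fin.addCases (fun i => ?_) (fun i => ?_) i
    · simp only [pert, Fin.append_left]; exact mul_nonneg hc0 (hq.1 i)
    · simp only [pert, Fin.append_right]; exact div_nonneg (by linarith) hN'.le
  · rw [Fin.sum_univ_add]
    simp only [pert, Fin.append_left, Fin.append_right, ← Finset.mul_sum, hq.2]
    simp only [Finset.sum_const, Finset.card_univ, Fintype.card_fin, nsmul_eq_mul]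
    field_simp; ring

lemma pert_dist {m : ℕ} {q : Fin m → ℝ} (hq : IsProbVec q) {c : ℝ} (hc1 : c ≤ 1)
    {N : ℕ} (hN : 0 < N) : l1PadDist q (pert q c N) = 2 * (1 - c) := by
  have hN' : (0 : ℝ) < N := by exact_mod_cast hN
  have gen : ∀ (G : ℕ → ℝ) (M : ℕ), M = m + N →
      ∑ i : Fin M, G i = ∑ i : Fin (m + N), G i := by
    intro G M hM; subst hM; rfl
  unfold l1PadDist
  rw [gen (fun i => |(if h : i < m then q ⟨i, h⟩ else 0) -
      (if h : i < m + N then pert q c N ⟨i, h⟩ else 0)|) _ (max_eq_right (by omega)),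
    Fin.sum_univ_add]
  have h1 : ∀ i : Fin m, |(if h : (Fin.castAdd N i : ℕ) < m then q ⟨Fin.castAdd N i, h⟩ else 0) -
      (if h : (Fin.castAdd N i : ℕ) < m + N then pert q c N ⟨Fin.castAdd N i, h⟩ else 0)|
      = (1 - c) * q i := by
    intro i
    rw [dif_pos (by simp), dif_pos (by simp; omega)]
    have e : pert q c N ⟨Fin.castAdd N i, by simp; omega⟩ = c * q i :=
      Fin.append_left _ _ i
    rw [e]
    have e2 : q ⟨(Fin.castAdd N i : ℕ), by simp⟩ = q i := rfl
    rw [e2, show q i - c * q i = (1 - c) * q i by ring]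
    exact abs_of_nonneg (mul_nonneg (by linarith) (hq.1 i))
  have h2 : ∀ i : Fin N, |(if h : (Fin.natAdd m i : ℕ) < m then q ⟨Fin.natAdd m i, h⟩ else 0) -
      (if h : (Fin.natAdd m i : ℕ) < m + N then pert q c N ⟨Fin.natAdd m i, h⟩ else 0)|
      = (1 - c) / N := by
    intro i
    rw [dif_neg (by simp), dif_pos (by simp)]
    have e : pert q c N ⟨Fin.natAdd m i, by simp⟩ = (1 - c) / N :=
      Fin.append_right _ _ i
    rw [e, zero_sub, abs_neg]
    exact abs_of_nonneg (div_nonneg (by linarith) hN'.le)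
  rw [Finset.sum_congr rfl fun i _ => h1 i, Finset.sum_congr rfl fun i _ => h2 i,
    ← Finset.mul_sum, hq.2]
  simp only [Finset.sum_const, Finset.card_univ, Fintype.card_fin, nsmul_eq_mul]
  field_simp; ring

lemma pert_topSum {m : ℕ} {q : Fin m → ℝ} (hq : IsProbVec q) {c : ℝ} (hc0 : 0 ≤ c) (hc1 : c ≤ 1)
    {N : ℕ} (hN : 0 < N) (n k : ℕ) :
    topSum (kpow (pert q c N) n) k ≤ c ^ n * topSum (kpow q n) k + k * (1 / N) := by
  classical
  have hN' : (0 : ℝ) < N := by exact_mod_cast hN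
  have hpp := pert_prob hq hc0 hc1 hN
  refine topSum_le _ (by have := topSum_nonneg (kpow q n) k; positivity) fun S hS => ?_
  let e : (Fin n → Fin m) ↪ (Fin n → Fin (m + N)) :=
    ⟨fun y j => Fin.castAdd N (y j), fun y y' h => by
      funext j; exact Fin.castAdd_injective m N (congrFun h j)⟩
  set T : Finset (Fin n → Fin m) := Finset.univ.filter fun y => e y ∈ S with hT
  have hsub : T.map e ⊆ S := by
    intro x hx
    obtain ⟨y, hy, rfl⟩ := Finset.mem_map.1 hx
    exact (Finset.mem_filter.1 hy).2
  have hcard : T.card ≤ k := by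
    rw [← Finset.card_map e]; exact (Finset.card_le_card hsub).trans hS
  rw [← Finset.sum_sdiff hsub, add_comm]
  refine add_le_add ?_ ?_
  · rw [Finset.sum_map]
    have : ∀ y, kpow (pert q c N) n (e y) = c ^ n * kpow q n y := by
      intro y
      have : ∀ j, pert q c N (e y j) = c * q (y j) := fun j => Fin.append_left _ _ (y j)
      simp [kpow, this, Finset.prod_mul_distrib]
    simp only [this, ← Finset.mul_sum]
    exact mul_le_mul_of_nonneg_left (le_topSum _ hcard) (pow_nonneg hc0 n)
  · calc _ ≤ ∑ x ∈ S \ T.map e, (1 / N : ℝ) := Finset.sum_le_sum fun x hx => ?_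
      _ ≤ k * (1 / N) := by
        rw [Finset.sum_const, nsmul_eq_mul]
        gcongr
        exact (Finset.card_le_card Finset.sdiff_subset).trans hS
    rw [Finset.mem_sdiff] at hx
    have hex : ∃ j, ¬ (x j : ℕ) < m := by
      by_contra! hall
      apply hx.2
      have hxe : e (fun j => ⟨x j, hall j⟩) = x := by
        funext j; exact Fin.ext rfl
      refine Finset.mem_map.2 ⟨_, Finset.mem_filter.2 ⟨Finset.mem_univ _, ?_⟩, hxe⟩
      rw [hxe]; exact hx.1
    obtain ⟨j, hj⟩ := hex
    have hval : pert q c N (x j) ≤ 1 / N := by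
      have hx' : x j = Fin.natAdd m ⟨x j - m, by have := (x j).2; omega⟩ := by
        apply Fin.ext; simp; omega
      rw [hx']
      simp only [pert, Fin.append_right]
      gcongr
      linarith
    have h1 := Finset.mul_prod_erase Finset.univ (fun j => pert q c N (x j)) (Finset.mem_univ j)
    unfold kpow
    rw [← h1]
    have h2 : ∏ j ∈ Finset.univ.erase j, pert q c N (x j) ≤ 1 :=
      Finset.prod_le_one (fun j _ => hpp.1 _) fun j _ => prob_le_one hpp _
    have h3 := mul_le_mul hval h2 (Finset.prod_nonneg fun j _ => hpp.1 _)
      (by positivity : (0 : ℝ) ≤ 1 / N)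
    linarith

lemma iii_to_i {m m' : ℕ} {p : Fin m → ℝ} {q : Fin m' → ℝ} (hp : IsProbVec p)
    (hq : IsProbVec q) (H : ∀ α : ℝ, 1 ≤ α → Zf q α ≤ Zf p α) (ε : ℝ) (hε : 0 < ε) :
    ∃ (m'' : ℕ) (q' : Fin m'' → ℝ), IsProbVec q' ∧ l1PadDist q q' ≤ ε ∧
          ∃ nn : ℕ, 1 ≤ nn ∧ Majorizes (kpow p nn) (kpow q' nn) := by
  set c := 1 - min (ε / 2) (1 / 2) with hc
  have hd0 : 0 < min (ε / 2) (1 / 2) := by positivity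
  have hd1 := min_le_left (ε / 2) (1 / 2)
  have hd2 := min_le_right (ε / 2) (1 / 2)
  have hc0 : 0 < c := by rw [hc]; linarith
  have hc1 : c < 1 := by linarith
  obtain ⟨n, hn, hkey⟩ := key hp hq H hc0 hc1
  have hm : 0 < m := by
    rcases Nat.eq_zero_or_pos m with rfl | h
    · have := hp.2; simp at this
    · exact h
  have hN : 0 < 2 * m ^ n := by positivity
  have hpp := pert_prob hq hc0.le hc1.le hN
  have hP := kpow_prob hp n
  have hQ := kpow_prob hpp n
  refine ⟨_, pert q c (2 * m ^ n), hpp, ?_, n, hn, ?_, fun k => ?_⟩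
  · rw [pert_dist hq hc1.le hN]; linarith
  · rw [hP.2, hQ.2]
  · rcases Nat.eq_zero_or_pos k with rfl | hk
    · refine (topSum_le _ le_rfl fun S hS => ?_).trans (topSum_nonneg _ _)
      rw [Finset.card_eq_zero.1 (Nat.le_zero.1 hS)]; simp
    rcases le_total k (m ^ n) with hkm | hkm
    · have h1 := pert_topSum hq hc0.le hc1.le hN n k
      have h2 := hkey k hk
      have hmn : (0 : ℝ) < (m : ℝ) ^ n := by positivity
      have hkm' : (k : ℝ) ≤ (m : ℝ) ^ n := by exact_mod_cast hkm
      have h3 := ratio_topSum (kpow p n) hP.1 k Finset.univ (k / (m : ℝ) ^ n) (by positivity)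
        ((div_le_one hmn).2 hkm') (by
          rw [Finset.card_univ]
          simp only [Fintype.card_pi, Fintype.card_fin, Finset.prod_const, Finset.card_univ]
          push_cast
          rw [div_mul_cancel₀ _ hmn.ne'])
      rw [hP.2, mul_one] at h3
      have h4 : (k : ℝ) * (1 / ((2 * m ^ n : ℕ) : ℝ)) = 1 / 2 * (k / (m : ℝ) ^ n) := by
        push_cast; field_simp
      rw [h4] at h1
      linarith
    · have h1 := le_topSum (kpow p n) (k := k) (S := Finset.univ) (by
        rw [Finset.card_univ]; simpa using hkm)
      rw [hP.2] at h1
      refine le_trans (topSum_le _ zero_le_one fun S _ => ?_) h1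
      rw [← hQ.2]
      exact Finset.sum_le_sum_of_subset_of_nonneg (Finset.subset_univ _) fun x _ _ => hQ.1 x

/-- Sum of a function over all entries of `(1/n) p^{⊗a} ⊗ q^{⊗b}`. -/
def Gs {m m' : ℕ} (g : ℝ → ℝ) (p : Fin m → ℝ) (q : Fin m' → ℝ) (n a b : ℕ) : ℝ :=
  ∑ x : Fin a → Fin m, ∑ y : Fin b → Fin m', g ((1 / (n : ℝ)) * (kpow p a x * kpow q b y))

lemma sum_trick {m m' : ℕ} (g : ℝ → ℝ) (p : Fin m → ℝ) (q : Fin m' → ℝ) (n : ℕ) :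
    ∑ x, g (trick p q n x) = ∑ s : Fin n, Gs g p q n (n - 1 - s) s := by
  rw [Fintype.sum_sigma]
  refine Finset.sum_congr rfl fun s _ => ?_
  rw [Fintype.sum_prod_type]
  rfl

lemma sum_kron_trick_left {m m' : ℕ} (g : ℝ → ℝ) (p : Fin m → ℝ) (q : Fin m' → ℝ) (n : ℕ) :
    ∑ x, g (kron p (trick p q n) x) = ∑ s : Fin n, Gs g p q n (n - 1 - s + 1) s := by
  rw [Fintype.sum_prod_type]
  have : ∀ i, ∑ z, g (kron p (trick p q n) (i, z)) =
      ∑ s : Fin n, ∑ x : Fin (n - 1 - s) → Fin m, ∑ y : Fin s → Fin m',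
        g ((1 / (n : ℝ)) * (p i * kpow p _ x * kpow q _ y)) := by
    intro i
    rw [Fintype.sum_sigma]
    refine Finset.sum_congr rfl fun s _ => ?_
    rw [Fintype.sum_prod_type]
    refine Finset.sum_congr rfl fun x _ => Finset.sum_congr rfl fun y _ => ?_
    simp only [kron, trick]; congr 1; ring
  simp only [this]
  rw [Finset.sum_comm]
  refine Finset.sum_congr rfl fun s _ => ?_
  rw [Gs, sum_fin_succ_fun]
  simp only [kpow_cons]

lemma sum_kron_trick_right {m m' : ℕ} (g : ℝ → ℝ) (p : Fin m → ℝ) (q : Fin m' → ℝ) (n : ℕ) :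
    ∑ x, g (kron q (trick p q n) x) = ∑ s : Fin n, Gs g p q n (n - 1 - s) (s + 1) := by
  rw [Fintype.sum_prod_type]
  have : ∀ i, ∑ z, g (kron q (trick p q n) (i, z)) =
      ∑ s : Fin n, ∑ x : Fin (n - 1 - s) → Fin m, ∑ y : Fin s → Fin m',
        g ((1 / (n : ℝ)) * (kpow p _ x * (q i * kpow q _ y))) := by
    intro i
    rw [Fintype.sum_sigma]
    refine Finset.sum_congr rfl fun s _ => ?_
    rw [Fintype.sum_prod_type]
    refine Finset.sum_congr rfl fun x _ => Finset.sum_congr rfl fun y _ => ?_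
    simp only [kron, trick]; congr 1; ring
  simp only [this]
  rw [Finset.sum_comm]
  refine Finset.sum_congr rfl fun s _ => ?_
  rw [Gs, Finset.sum_comm]
  refine Finset.sum_congr rfl fun x _ => ?_
  rw [sum_fin_succ_fun]
  simp only [kpow_cons]

lemma trick_telescope {m m' : ℕ} (g : ℝ → ℝ) (p : Fin m → ℝ) (q : Fin m' → ℝ) (n : ℕ) :
    ∑ x, g (kron p (trick p q n) x) + Gs g p q n 0 n =
    ∑ x, g (kron q (trick p q n) x) + Gs g p q n n 0 := by
  rw [sum_kron_trick_left, sum_kron_trick_right,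
    Fin.sum_univ_eq_sum_range (fun s => Gs g p q n (n - 1 - s + 1) s),
    Fin.sum_univ_eq_sum_range (fun s => Gs g p q n (n - 1 - s) (s + 1))]
  have h1 : ∑ s ∈ Finset.range n, Gs g p q n (n - 1 - s + 1) s =
      ∑ s ∈ Finset.range n, Gs g p q n (n - s) s :=
    Finset.sum_congr rfl fun s hs => by
      have := Finset.mem_range.1 hs
      rw [show n - 1 - s + 1 = n - s by omega]
  have h2 : ∑ s ∈ Finset.range n, Gs g p q n (n - 1 - s) (s + 1) =
      ∑ s ∈ Finset.range n, Gs g p q n (n - (s + 1)) (s + 1) :=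
    Finset.sum_congr rfl fun s hs => by
      rw [show n - 1 - s = n - (s + 1) by omega]
  have h3 := Finset.sum_range_succ (fun s => Gs g p q n (n - s) s) n
  have h4 := Finset.sum_range_succ' (fun s => Gs g p q n (n - s) s) n
  simp only [Nat.sub_self, Nat.sub_zero] at h3 h4
  rw [h1, h2, ← h3, ← h4]

lemma catalyst {m m' : ℕ} {p : Fin m → ℝ} {q : Fin m' → ℝ} (hp : IsProbVec p)
    (hq : IsProbVec q) {n : ℕ} (hn : 1 ≤ n) (h : Majorizes (kpow p n) (kpow q n)) :
    ∃ (ρ : ℕ) (r : Fin ρ → ℝ), IsProbVec r ∧ Majorizes (kron p r) (kron q r) := by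
  have hn0 : (0 : ℝ) < n := by exact_mod_cast hn
  have htr : IsProbVec (trick p q n) := by
    refine ⟨fun x => mul_nonneg (by positivity)
      (mul_nonneg (kpow_nonneg hp.1 _ _) (kpow_nonneg hq.1 _ _)), ?_⟩
    have h1 := sum_trick (fun x => x) p q n
    rw [h1]
    have : ∀ a b, Gs (fun x => x) p q n a b = 1 / n := by
      intro a b
      simp only [Gs, ← Finset.mul_sum, (kpow_prob hq b).2, mul_one, (kpow_prob hp a).2]
    simp only [this, Finset.sum_const, Finset.card_univ, Fintype.card_fin, nsmul_eq_mul]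
    field_simp
  let e := Fintype.equivFin (TrickIdx m m' n)
  have hr : IsProbVec (fun i => trick p q n (e.symm i)) :=
    ⟨fun i => htr.1 _, by rw [e.symm.sum_comp]; exact htr.2⟩
  refine ⟨_, fun i => trick p q n (e.symm i), hr, ?_⟩
  refine majorizes_of_pos _ _ (kron_prob hp hr).1
    (by rw [(kron_prob hp hr).2, (kron_prob hq hr).2]) fun t ht => ?_
  have hre : ∀ {l : ℕ} (v : Fin l → ℝ),
      ∑ x, max (kron v (fun i => trick p q n (e.symm i)) x - t) 0 =
      ∑ x, max (kron v (trick p q n) x - t) 0 := by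
    intro l v
    rw [Fintype.sum_prod_type, Fintype.sum_prod_type]
    refine Finset.sum_congr rfl fun i _ => ?_
    exact e.symm.sum_comp (fun z => max (kron v (trick p q n) (i, z) - t) 0)
  rw [hre, hre]
  have h1 := trick_telescope (fun x => max (x - t) 0) p q n
  have hsc : ∀ x : ℝ, max (1 / (n : ℝ) * x - t) 0 = 1 / (n : ℝ) * max (x - n * t) 0 := by
    intro x
    rw [mul_max_of_nonneg _ _ (by positivity), mul_zero]
    congr 1
    field_simp
  have h2 : Gs (fun x => max (x - t) 0) p q n n 0 =
      1 / (n : ℝ) * ∑ x, max (kpow p n x - n * t) 0 := by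
    simp only [Gs, hsc, ← Finset.mul_sum]
    simp [kpow]
  have h3 : Gs (fun x => max (x - t) 0) p q n 0 n =
      1 / (n : ℝ) * ∑ x, max (kpow q n x - n * t) 0 := by
    simp only [Gs, hsc, ← Finset.mul_sum]
    simp [kpow]
  have h4 := pos_of_majorizes _ _ h (n * t) (by positivity)
  have h5 : 1 / (n : ℝ) * ∑ x, max (kpow q n x - n * t) 0 ≤
    1 / (n : ℝ) * ∑ x, max (kpow p n x - n * t) 0 := mul_le_mul_of_nonneg_left h4 (by positivity)
  linarith

lemma kernel_integrable {α : ℝ} (hα : 1 < α) (x a b : ℝ) :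
    IntervalIntegrable (fun t : ℝ => max (x - t) 0 * t ^ (α - 2)) MeasureTheory.volume a b := by
  refine IntervalIntegrable.continuousOn_mul ?_ (by fun_prop)
  exact intervalIntegral.intervalIntegrable_rpow' (by linarith)

lemma kernel_integral {α : ℝ} (hα : 1 < α) {x : ℝ} (hx0 : 0 ≤ x) (hx1 : x ≤ 1) :
    ∫ t in (0 : ℝ)..1, max (x - t) 0 * t ^ (α - 2) = x ^ α / (α * (α - 1)) := by
  rw [← intervalIntegral.integral_add_adjacent_intervals
    (kernel_integrable hα x 0 x) (kernel_integrable hα x x 1)]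
  have h1 : ∫ t in (0 : ℝ)..x, max (x - t) 0 * t ^ (α - 2) =
      ∫ t in (0 : ℝ)..x, (x * t ^ (α - 2) - t ^ (α - 1)) := by
    refine intervalIntegral.integral_congr fun t ht => ?_
    rw [Set.uIcc_of_le hx0] at ht
    rw [max_eq_left (by linarith [ht.2]), sub_mul]
    congr 1
    rcases ht.1.eq_or_lt with h | h
    · rw [← h, zero_mul, Real.zero_rpow (by linarith)]
    · rw [show α - 1 = 1 + (α - 2) by ring, Real.rpow_add h, Real.rpow_one]
  have h2 : ∫ t in x..(1 : ℝ), max (x - t) 0 * t ^ (α - 2) = 0 := by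
    rw [intervalIntegral.integral_congr (g := fun _ => (0 : ℝ))]
    · simp
    · intro t ht
      rw [Set.uIcc_of_le hx1] at ht
      simp only
      rw [max_eq_right (by linarith [ht.1]), zero_mul]
  rw [h1, h2, intervalIntegral.integral_sub
    ((intervalIntegral.intervalIntegrable_rpow' (by linarith)).const_mul x)
    (intervalIntegral.intervalIntegrable_rpow' (by linarith)),
    intervalIntegral.integral_const_mul, integral_rpow (Or.inl (by linarith)),
    integral_rpow (Or.inl (by linarith))]
  rw [show α - 2 + 1 = α - 1 by ring, show α - 1 + 1 = α by ring,
    Real.zero_rpow (by linarith), Real.zero_rpow (by linarith)]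
  have hx : x * x ^ (α - 1) = x ^ α := by
    rcases hx0.eq_or_lt with h | h
    · rw [← h, zero_mul, Real.zero_rpow (by linarith)]
    · rw [show α = 1 + (α - 1) by ring, Real.rpow_add h, Real.rpow_one]; ring_nf
  have e1 : α - 1 ≠ 0 := by linarith
  have e2 : α ≠ 0 := by linarith
  rw [← hx]
  field_simp
  ring

lemma schur {ι κ : Type*} [Fintype ι] [Fintype κ] {p : ι → ℝ} {q : κ → ℝ} (hp : IsProbVec p)
    (hq : IsProbVec q) (h : Majorizes p q) {α : ℝ} (hα : 1 < α) :
    ∑ j, q j ^ α ≤ ∑ i, p i ^ α := by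
  have rep : ∀ {ι : Type _} [Fintype ι] {p : ι → ℝ}, IsProbVec p →
      (∑ i, p i ^ α) / (α * (α - 1)) =
      ∫ t in (0 : ℝ)..1, ∑ i, max (p i - t) 0 * t ^ (α - 2) := by
    intro ι _ p hp
    rw [intervalIntegral.integral_finsetSum fun i _ => kernel_integrable hα (p i) 0 1,
      Finset.sum_div]
    exact Finset.sum_congr rfl fun i _ => (kernel_integral hα (hp.1 i) (prob_le_one hp i)).symm
  have rep' : (∑ i, q i ^ α) / (α * (α - 1)) =
      ∫ t in (0 : ℝ)..1, ∑ i, max (q i - t) 0 * t ^ (α - 2) := by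
    rw [intervalIntegral.integral_finsetSum fun i _ => kernel_integrable hα (q i) 0 1,
      Finset.sum_div]
    exact Finset.sum_congr rfl fun i _ => (kernel_integral hα (hq.1 i) (prob_le_one hq i)).symm
  have hpos : 0 < α * (α - 1) := mul_pos (by linarith) (by linarith)
  rw [← div_le_div_iff_of_pos_right hpos, rep hp, rep']
  refine intervalIntegral.integral_mono_on zero_le_one
    (by simpa only [Finset.sum_fn] using
      IntervalIntegrable.sum Finset.univ fun i _ => kernel_integrable hα (q i) 0 1)
    (by simpa only [Finset.sum_fn] using
      IntervalIntegrable.sum Finset.univ fun i _ => kernel_integrable hα (p i) 0 1) fun t ht => ?_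
  rw [← Finset.sum_mul, ← Finset.sum_mul]
  exact mul_le_mul_of_nonneg_right (pos_of_majorizes p q h t ht.1) (Real.rpow_nonneg ht.1 _)

lemma sum_pad {m M : ℕ} (hM : m ≤ M) (p : Fin m → ℝ) {α : ℝ} (hα : 1 ≤ α) :
    ∑ i : Fin M, (if h : (i : ℕ) < m then p ⟨i, h⟩ else 0) ^ α = Zf p α := by
  obtain ⟨e, rfl⟩ := Nat.exists_eq_add_of_le hM
  rw [Fin.sum_univ_add]
  simp [Zf, Real.zero_rpow (by linarith : α ≠ 0)]

lemma rpow_lip {α x y : ℝ} (hα : 1 ≤ α) (hx0 : 0 ≤ x) (hx1 : x ≤ 1) (hy0 : 0 ≤ y) :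
    x ^ α ≤ y ^ α + α * |x - y| := by
  rcases hx0.eq_or_lt with h | h
  · rw [← h, Real.zero_rpow (by linarith)]
    have := Real.rpow_nonneg hy0 α
    positivity
  have h1 := one_add_mul_self_le_rpow_one_add (s := y / x - 1)
    (by have : 0 ≤ y / x := by positivity
        linarith) hα
  rw [show 1 + (y / x - 1) = y / x by ring, Real.div_rpow hy0 hx0,
    le_div_iff₀ (Real.rpow_pos_of_pos h _)] at h1
  have h2 : x ^ α ≤ x := by
    simpa using Real.rpow_le_rpow_of_exponent_ge h hx1 hα
  have h3 : (1 + α * (y / x - 1)) * x ^ α = x ^ α - α * (x - y) * (x ^ α / x) := by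
    field_simp; ring
  rw [h3] at h1
  have h4 : x ^ α / x ≤ 1 := (div_le_one h).2 h2
  have h5 : 0 ≤ x ^ α / x := by positivity
  have h6 : (x - y) * (x ^ α / x) ≤ |x - y| :=
    calc _ ≤ |x - y| * (x ^ α / x) := mul_le_mul_of_nonneg_right (le_abs_self _) h5
      _ ≤ |x - y| * 1 := mul_le_mul_of_nonneg_left h4 (abs_nonneg _)
      _ = _ := mul_one _
  have h7 := mul_le_mul_of_nonneg_left h6 (by linarith : 0 ≤ α)
  linarith

lemma Zf_lip {m m' : ℕ} {q : Fin m → ℝ} {q' : Fin m' → ℝ} (hq : IsProbVec q)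
    (hq' : IsProbVec q') {α : ℝ} (hα : 1 ≤ α) :
    Zf q α ≤ Zf q' α + α * l1PadDist q q' := by
  rw [← sum_pad (le_max_left m m') q hα, ← sum_pad (le_max_right m m') q' hα, l1PadDist,
    Finset.mul_sum, ← Finset.sum_add_distrib]
  refine Finset.sum_le_sum fun i _ => rpow_lip hα ?_ ?_ ?_
  · split_ifs
    · exact hq.1 _
    · exact le_rfl
  · split_ifs
    · exact prob_le_one hq _
    · exact zero_le_one
  · split_ifs
    · exact hq'.1 _
    · exact le_rfl

lemma ii_to_iii {m m' : ℕ} {p : Fin m → ℝ} {q : Fin m' → ℝ} (hp : IsProbVec p)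
    (hq : IsProbVec q) (H : ∀ ε : ℝ, 0 < ε →
        ∃ (m'' : ℕ) (q' : Fin m'' → ℝ), IsProbVec q' ∧ l1PadDist q q' ≤ ε ∧
          ∃ (ρ : ℕ) (r : Fin ρ → ℝ), IsProbVec r ∧
            Majorizes (kron p r) (kron q' r)) (α : ℝ) (hα : 1 ≤ α) : Zf q α ≤ Zf p α := by
  rcases hα.eq_or_lt with rfl | hα1
  · simp [Zf, hp.2, hq.2]
  refine le_of_forall_pos_le_add fun ε hε => ?_
  obtain ⟨m'', q', hq', hd, ρ, r, hr, hmaj⟩ := H (ε / α) (by positivity)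
  have h1 := schur (kron_prob hp hr) (kron_prob hq' hr) hmaj hα1
  have hk : ∀ {l : ℕ} {v : Fin l → ℝ}, IsProbVec v →
      ∑ x, kron v r x ^ α = Zf v α * Zf r α := by
    intro l v hv
    rw [Fintype.sum_prod_type, Zf, Zf, Finset.sum_mul_sum]
    refine Finset.sum_congr rfl fun i _ => Finset.sum_congr rfl fun j _ => ?_
    exact Real.mul_rpow (hv.1 i) (hr.1 j)
  rw [hk hp, hk hq'] at h1
  have h2 := le_of_mul_le_mul_right h1 (Zf_pos hr α)
  have h3 := Zf_lip hq hq' hα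
  have h4 : α * l1PadDist q q' ≤ ε := by
    calc _ ≤ α * (ε / α) := mul_le_mul_of_nonneg_left hd (by linarith)
      _ = ε := by field_simp
  linarith

end AN

/-- **Aubrun–Nechita.**  For finite probability vectors `p, q`, approximate
asymptotic majorization, approximate catalytic majorization, and the ordering
`f_α(p) ≥ f_α(q)` for all `α ≥ 1` are equivalent. -/
theorem aubrun_nechita
    {m m' : ℕ} (p : Fin m → ℝ) (q : Fin m' → ℝ)
    (hp : IsProbVec p) (hq : IsProbVec q) :
    ((∀ ε : ℝ, 0 < ε →
        ∃ (m'' : ℕ) (q' : Fin m'' → ℝ), IsProbVec q' ∧ l1PadDist q q' ≤ ε ∧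
          ∃ nn : ℕ, 1 ≤ nn ∧ Majorizes (kpow p nn) (kpow q' nn)) ↔
      (∀ ε : ℝ, 0 < ε →
        ∃ (m'' : ℕ) (q' : Fin m'' → ℝ), IsProbVec q' ∧ l1PadDist q q' ≤ ε ∧
          ∃ (ρ : ℕ) (r : Fin ρ → ℝ), IsProbVec r ∧
            Majorizes (kron p r) (kron q' r))) ∧
    ((∀ ε : ℝ, 0 < ε →
        ∃ (m'' : ℕ) (q' : Fin m'' → ℝ), IsProbVec q' ∧ l1PadDist q q' ≤ ε ∧
          ∃ (ρ : ℕ) (r : Fin ρ → ℝ), IsProbVec r ∧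
            Majorizes (kron p r) (kron q' r)) ↔
      (∀ α : ℝ, 1 ≤ α → fA α q ≤ fA α p)) := by
  have h12 : (∀ ε : ℝ, 0 < ε →
        ∃ (m'' : ℕ) (q' : Fin m'' → ℝ), IsProbVec q' ∧ l1PadDist q q' ≤ ε ∧
          ∃ nn : ℕ, 1 ≤ nn ∧ Majorizes (kpow p nn) (kpow q' nn)) →
      (∀ ε : ℝ, 0 < ε →
        ∃ (m'' : ℕ) (q' : Fin m'' → ℝ), IsProbVec q' ∧ l1PadDist q q' ≤ ε ∧
          ∃ (ρ : ℕ) (r : Fin ρ → ℝ), IsProbVec r ∧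
            Majorizes (kron p r) (kron q' r)) := by
    intro H ε hε
    obtain ⟨m'', q', hq', hd, n, hn, hmaj⟩ := H ε hε
    exact ⟨m'', q', hq', hd, AN.catalyst hp hq' hn hmaj⟩
  refine ⟨⟨h12, fun H => AN.iii_to_i hp hq (AN.ii_to_iii hp hq H)⟩, fun H α hα => ?_, fun H => ?_⟩
  · rw [AN.fA_eq hα, AN.fA_eq hα]
    exact AN.ii_to_iii hp hq H α hα
  · refine h12 (AN.iii_to_i hp hq fun α hα => ?_)
    rw [← AN.fA_eq hα, ← AN.fA_eq hα]
    exact H α hα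
end
end
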